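/- For every integer K > 1 there exists a uniquely ergodic C^{K-1} diffeomorphism T of the torus 𝕋² whose unique invariant Borel probability measure is the Haar–Lebesgue measure λ, such that T is measure-theoretically isomorphic to the rotation of the circle by some irrational number and the upper topological slow entropy of T with respect to the polynomial scaling family a^{pol}_m(t) = m^t satisfies 1/K⁵ ≤ ent̄^top_{a^{pol}}(T) < 1/(K⁵−K−8). -/

import Mathlib

open MeasureTheory Filter Set
open scoped Topology ENNReal NNReal

noncomputable section

/-- The Bowen metric `d_n^T(x,y) = max_{0 ≤ i ≤ n-1} d(T^i x, T^i y)`. -/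
def bowenDist {X : Type*} [PseudoMetricSpace X] (T : X → X) (n : ℕ) (x y : X) : ℝ :=
  (((Finset.range n).sup fun i => nndist (T^[i] x) (T^[i] y)) : ℝ≥0)

/-- `N_{d_n^T}(ε)`: the minimal number of `(ε,n)`-Bowen balls of `T` needed to cover the
whole space. -/
def bowenCoverNum {X : Type*} [PseudoMetricSpace X] (T : X → X) (n : ℕ) (ε : ℝ) : ℕ :=
  sInf {N : ℕ | ∃ F : Finset X, F.card = N ∧ ∀ y : X, ∃ x ∈ F, bowenDist T n x y < ε}

/-- `N(ε)`: the supremum (`0` if the set is empty, by the `Real.sSup` convention) of all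
`t > 0` such that `limsup_n N_{d_n^T}(ε) / a_n(t) > 0`. -/
def topSlowEntFun {X : Type*} [PseudoMetricSpace X] (T : X → X) (a : ℕ → ℝ → ℝ) (ε : ℝ) : ℝ :=
  sSup {t : ℝ | 0 < t ∧
    0 < Filter.atTop.limsup fun n => (bowenCoverNum T n ε : ℝ≥0∞) / ENNReal.ofReal (a n t)}

/-- The upper topological slow entropy of `T` with respect to the scaling family `a`
equals `E`, i.e. `N(ε) → E` as `ε → 0⁺`. -/
def HasUpperTopSlowEntropy {X : Type*} [PseudoMetricSpace X] (T : X → X)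
    (a : ℕ → ℝ → ℝ) (E : ℝ) : Prop :=
  Filter.Tendsto (topSlowEntFun T a) (𝓝[>] (0 : ℝ)) (𝓝 E)

/-- The circle `𝕋¹ = ℝ/ℤ` with its quotient metric and Haar–Lebesgue probability
measure `volume`. -/
abbrev Torus1 : Type := AddCircle (1 : ℝ)

/-- The 2-torus `𝕋² = ℝ²/ℤ²`, with its quotient (flat) metric, its Borel σ-algebra and
its Haar–Lebesgue probability measure `volume`. -/
abbrev Torus2 : Type := AddCircle (1 : ℝ) × AddCircle (1 : ℝ)

/-- Canonical projection `ℝ² → 𝕋²`. -/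
def torusProj : ℝ × ℝ → Torus2 := fun p => ((p.1 : Torus1), (p.2 : Torus1))

/-- `F : ℝ² → ℝ²` is a lift of `T : 𝕋² → 𝕋²`. -/
def IsLiftOf (F : ℝ × ℝ → ℝ × ℝ) (T : Torus2 → Torus2) : Prop :=
  ∀ p, torusProj (F p) = T (torusProj p)

/-- `T` is a `C^k` diffeomorphism of the torus: it is a bijection and both `T` and `T⁻¹`
admit `C^k` lifts to the universal cover `ℝ²`. -/
def IsCkTorusDiffeo (k : ℕ∞) (T : Torus2 → Torus2) : Prop :=
  Function.Bijective T ∧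
  (∃ F : ℝ × ℝ → ℝ × ℝ, ContDiff ℝ k F ∧ IsLiftOf F T) ∧
  (∃ G : ℝ × ℝ → ℝ × ℝ, ContDiff ℝ k G ∧ IsLiftOf G (Function.invFun T))

/-- `T` is weakly mixing w.r.t. the measure `μ`: `T × T` is ergodic for `μ × μ`. -/
def WeaklyMixing {X : Type*} [MeasurableSpace X] (T : X → X) (μ : Measure X) : Prop :=
  Ergodic (fun p : X × X => (T p.1, T p.2)) (μ.prod μ)

/-- `T` is uniquely ergodic with the Haar–Lebesgue measure `volume` as its unique
invariant Borel probability measure. -/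
def UniquelyErgodicWithVolume (T : Torus2 → Torus2) : Prop :=
  MeasurePreserving T volume volume ∧
  ∀ μ : Measure Torus2, IsProbabilityMeasure μ → MeasurePreserving T μ μ → μ = volume

/-- `T` (preserving the Haar measure `volume` on `𝕋²`) is measure-theoretically isomorphic
to the rotation of the circle `𝕋¹ = ℝ/ℤ` by some irrational number `α`. -/
def IsoToIrrationalRotation (T : Torus2 → Torus2) : Prop :=
  ∃ α : ℝ, Irrational α ∧
    ∃ (A : Set Torus2) (B : Set Torus1) (ψ : Torus2 → Torus1) (φ : Torus1 → Torus2),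
      MeasurableSet A ∧ MeasurableSet B ∧
      volume Aᶜ = 0 ∧ volume Bᶜ = 0 ∧
      Set.MapsTo T A A ∧ Set.MapsTo (fun y : Torus1 => y + (α : Torus1)) B B ∧
      Measurable ψ ∧ Measurable φ ∧
      Set.MapsTo ψ A B ∧ Set.MapsTo φ B A ∧
      (∀ x ∈ A, φ (ψ x) = x) ∧ (∀ y ∈ B, ψ (φ y) = y) ∧
      Measure.map ψ volume = volume ∧
      (∀ x ∈ A, ψ (T x) = ψ x + (α : Torus1))

/-- A finite measurable partition of `X`. -/
structure FinMeasPartition (X : Type*) [MeasurableSpace X] where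
  card : ℕ
  piece : Fin card → Set X
  measurable : ∀ i, MeasurableSet (piece i)
  disjoint : Pairwise fun i j => Disjoint (piece i) (piece j)
  cover : (⋃ i, piece i) = Set.univ

open Classical in
/-- The normalized Hamming distance between the length-`n` `P`-codings of the `T`-orbits
of `x` and `y` (the codings differ at time `k` iff `T^k x` and `T^k y` lie in different
pieces of `P`). -/
def codeHammingDist {X : Type*} [MeasurableSpace X] (T : X → X) (P : FinMeasPartition X)
    (n : ℕ) (x y : X) : ℝ :=
  (((Finset.range n).filter fun k =>
      ¬ ∃ i, T^[k] x ∈ P.piece i ∧ T^[k] y ∈ P.piece i).card : ℝ) / n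

/-- `S^H_P(T,n,ε)`: the minimal number of `(ε,n)`-Hamming balls whose union has
`μ`-measure greater than `1 - ε`. -/
def hammingCoverNum {X : Type*} [MeasurableSpace X] (μ : Measure X) (T : X → X)
    (P : FinMeasPartition X) (n : ℕ) (ε : ℝ) : ℕ :=
  sInf {N : ℕ | ∃ F : Finset X, F.card = N ∧
    ENNReal.ofReal (1 - ε) < μ (⋃ x ∈ F, {y | codeHammingDist T P n x y < ε})}

/-- For a fixed partition `P` and `ε > 0`: the supremum (with the `Real.sSup` convention,
`0` if the set is empty) of all `t > 0` with `limsup_n S^H_P(T,n,ε)/a_n(t) > 0`. -/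
def measSlowEntFun {X : Type*} [MeasurableSpace X] (μ : Measure X) (T : X → X)
    (a : ℕ → ℝ → ℝ) (P : FinMeasPartition X) (ε : ℝ) : ℝ :=
  sSup {t : ℝ | 0 < t ∧
    0 < Filter.atTop.limsup fun n =>
      (hammingCoverNum μ T P n ε : ℝ≥0∞) / ENNReal.ofReal (a n t)}

/-- The upper measure-theoretic slow entropy of `(T,μ)` w.r.t. the scaling family `a`
equals `E`: for every finite measurable partition the limit as `ε → 0⁺` exists, and the
least upper bound over all partitions of these limits is `E`. -/
def HasUpperMeasSlowEntropy {X : Type*} [MeasurableSpace X] (μ : Measure X) (T : X → X)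
    (a : ℕ → ℝ → ℝ) (E : ℝ) : Prop :=
  (∀ P : FinMeasPartition X, ∃ e : ℝ,
      Filter.Tendsto (measSlowEntFun μ T a P) (𝓝[>] (0 : ℝ)) (𝓝 e)) ∧
  IsLUB {e : ℝ | ∃ P : FinMeasPartition X,
      Filter.Tendsto (measSlowEntFun μ T a P) (𝓝[>] (0 : ℝ)) (𝓝 e)} E

/-- `Γ_r(x) = (Γ(x^{1/r} + 1))^r`, where `Γ` is the Euler Gamma function. -/
def GammaR (r : ℕ) (x : ℝ) : ℝ := (Real.Gamma (x ^ ((r : ℝ)⁻¹) + 1)) ^ r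

/-- The inverse of `Γ_r` on `[1,∞)` (where `Γ_r` is strictly increasing with `Γ_r 1 = 1`). -/
def GammaRInv (r : ℕ) (y : ℝ) : ℝ := sSup {x : ℝ | 1 ≤ x ∧ GammaR r x ≤ y}

/-- The intermediate scaling family `a^{int1,r}_m(t) = m^(t / Γ_r⁻¹(ln m / ln q₁))`. -/
def intScale1 (r q₁ : ℕ) (m : ℕ) (t : ℝ) : ℝ :=
  (m : ℝ) ^ (t / GammaRInv r (Real.log m / Real.log q₁))

/-- The intermediate scaling family
`a^{int2,r}_m(t) = m^(t / (Γ_r⁻¹(ln m / ln q₁))^((r-2)/r))`. -/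
def intScale2 (r q₁ : ℕ) (m : ℕ) (t : ℝ) : ℝ :=
  (m : ℝ) ^ (t / GammaRInv r (Real.log m / Real.log q₁) ^ (((r : ℝ) - 2) / (r : ℝ)))

/-- The logarithmic scaling family `a^{ln}_m(t) = (ln m)^t`. -/
def logScale (m : ℕ) (t : ℝ) : ℝ := Real.log m ^ t

/-- The polynomial scaling family `a^{pol}_m(t) = m^t`. -/
def polScale (m : ℕ) (t : ℝ) : ℝ := (m : ℝ) ^ t

end


open MeasureTheory Filter Set
open scoped Topology ENNReal NNReal ContDiff

namespace AbC

/-- `f` is smooth with `‖D^i f‖ ≤ M^i` for `1 ≤ i ≤ k`. -/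
def Bd {E F : Type*} [NormedAddCommGroup E] [NormedSpace ℝ E] [NormedAddCommGroup F]
    [NormedSpace ℝ F] (k : ℕ) (M : ℝ) (f : E → F) : Prop :=
  ContDiff ℝ ∞ f ∧ ∀ i, 1 ≤ i → i ≤ k → ∀ x, ‖iteratedFDeriv ℝ i f x‖ ≤ M ^ i

section bd
variable {E F G : Type*} [NormedAddCommGroup E] [NormedSpace ℝ E] [NormedAddCommGroup F]
    [NormedSpace ℝ F] [NormedAddCommGroup G] [NormedSpace ℝ G]

lemma ContDiff.toNat {f : E → F} (hf : ContDiff ℝ ∞ f) (n : ℕ) : ContDiff ℝ n f :=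
  hf.of_le (by exact_mod_cast le_top)

lemma iteratedFDeriv_sub_const {f : E → F} (hf : ContDiff ℝ ∞ f) (c : F) {i : ℕ} (hi : 1 ≤ i)
    (x : E) : iteratedFDeriv ℝ i (fun y => f y - c) x = iteratedFDeriv ℝ i f x := by
  have h := iteratedFDeriv_sub_apply (𝕜 := ℝ) (i := i) (f := f) (g := fun _ => c) (x := x)
    (ContDiff.toNat hf i).contDiffAt contDiff_const.contDiffAt
  have h2 : (f - fun _ => c) = fun y => f y - c := rfl
  rw [h2] at h
  rw [h, iteratedFDeriv_const_of_ne (by omega)]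
  simp

/-- composition bound with constant bound for the outer function -/
lemma comp_bound {g : F → G} {f : E → F} (hg : ContDiff ℝ ∞ g) (hf : ContDiff ℝ ∞ f)
    {n : ℕ} (hn : 1 ≤ n) (x : E) {C D : ℝ} (hC0 : 0 ≤ C)
    (hC : ∀ i, 1 ≤ i → i ≤ n → ∀ y, ‖iteratedFDeriv ℝ i g y‖ ≤ C)
    (hD : ∀ i, 1 ≤ i → i ≤ n → ‖iteratedFDeriv ℝ i f x‖ ≤ D ^ i) :
    ‖iteratedFDeriv ℝ n (g ∘ f) x‖ ≤ n.factorial * C * D ^ n := by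
  have hg' : ContDiff ℝ ∞ (fun y => g y - g (f x)) := hg.sub contDiff_const
  have h1 : iteratedFDeriv ℝ n (g ∘ f) x
      = iteratedFDeriv ℝ n ((fun y => g y - g (f x)) ∘ f) x := by
    rw [← iteratedFDeriv_sub_const (hg.comp hf) (g (f x)) hn]
    rfl
  rw [h1]
  refine norm_iteratedFDeriv_comp_le hg' hf (by exact_mod_cast le_top) x ?_ hD
  intro i hi
  rcases Nat.eq_zero_or_pos i with h0 | h0
  · subst h0
    simp [hC0]
  · rw [iteratedFDeriv_sub_const hg _ h0]
    exact hC i h0 hi _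

lemma Bd.comp {k : ℕ} {A B : ℝ} {g : F → G} {f : E → F} (hA : 0 ≤ A) (hB : 1 ≤ B)
    (hg : Bd k B g) (hf : Bd k A f) : Bd k (k.factorial * B ^ k * A) (g ∘ f) := by
  refine ⟨hg.1.comp hf.1, fun i h1 hi x => ?_⟩
  have h := comp_bound hg.1 hf.1 h1 x (C := B ^ k) (D := A) (by positivity)
    (fun j hj hji y => (hg.2 j hj (hji.trans hi) y).trans
      (pow_le_pow_right₀ hB (hji.trans hi)))
    (fun j hj hji => hf.2 j hj (hji.trans hi) x)
  refine h.trans ?_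
  have h3 : ((i.factorial : ℝ) * B ^ k) ≤ (k.factorial * B ^ k) := by
    gcongr
  have h4 : (1 : ℝ) ≤ k.factorial * B ^ k := by
    have : (1 : ℝ) ≤ k.factorial := by exact_mod_cast Nat.one_le_iff_ne_zero.2 (Nat.factorial_ne_zero k)
    have := one_le_pow₀ hB (n := k)
    nlinarith
  have h5 : (k.factorial * B ^ k : ℝ) ≤ (k.factorial * B ^ k) ^ i :=
    le_self_pow₀ h4 (by omega)
  rw [mul_pow]
  have : (0:ℝ) ≤ A ^ i := by positivity
  exact mul_le_mul_of_nonneg_right (h3.trans h5) this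

lemma Bd.mono {k : ℕ} {A B : ℝ} {f : E → F} (hA : 0 ≤ A) (hAB : A ≤ B) (hf : Bd k A f) :
    Bd k B f :=
  ⟨hf.1, fun i h1 hi x => (hf.2 i h1 hi x).trans (pow_le_pow_left₀ hA hAB i)⟩

lemma Bd_clm (k : ℕ) (L : E →L[ℝ] F) {M : ℝ} (hL : ‖L‖ ≤ M) : Bd k M L := by
  refine ⟨L.contDiff, fun i h1 hi x => ?_⟩
  have hM : 0 ≤ M := (norm_nonneg _).trans hL
  rcases Nat.lt_or_ge 1 i with h | h
  · have : iteratedFDeriv ℝ i L x = 0 := by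
      obtain ⟨j, rfl⟩ : ∃ j, i = j + 2 := ⟨i - 2, by omega⟩
      have h0 : ‖iteratedFDeriv ℝ (j+2) L x‖ = 0 := by
        rw [← norm_iteratedFDeriv_fderiv]
        have : fderiv ℝ L = fun _ => L := by ext1 y; exact L.fderiv
        rw [this, iteratedFDeriv_const_of_ne (by omega)]
        simp
      exact norm_eq_zero.1 h0
    rw [this, norm_zero]
    positivity
  · obtain rfl : i = 1 := by omega
    rw [norm_iteratedFDeriv_one, L.fderiv, pow_one]
    exact hL

end bd

/-! ### the smooth step -/

lemma step_bound (j : ℕ) (hj : 1 ≤ j) :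
    ∃ B : ℝ, ∀ x, ‖iteratedFDeriv ℝ j Real.smoothTransition x‖ ≤ B := by
  have hc : Continuous fun x => ‖iteratedFDeriv ℝ j Real.smoothTransition x‖ :=
    ((Real.smoothTransition.contDiff (n := j)).continuous_iteratedFDeriv' ).norm
  obtain ⟨B, hB⟩ := (isCompact_Icc (a := (0:ℝ)) (b := 1)).bddAbove_image hc.continuousOn
  refine ⟨max B 0, fun x => ?_⟩
  have hconst : ∀ c : ℝ, (Real.smoothTransition =ᶠ[𝓝 x] fun _ => c) →
      ‖iteratedFDeriv ℝ j Real.smoothTransition x‖ ≤ max B 0 := by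
    intro c h
    rw [(h.iteratedFDeriv ℝ j).eq_of_nhds, iteratedFDeriv_const_of_ne (by omega)]
    simp
  rcases lt_or_ge x 0 with h | h
  · exact hconst 0 (by
      filter_upwards [Iio_mem_nhds h] with y hy
      exact Real.smoothTransition.zero_of_nonpos (le_of_lt hy))
  rcases lt_or_ge 1 x with h' | h'
  · exact hconst 1 (by
      filter_upwards [Ioi_mem_nhds h'] with y hy
      exact Real.smoothTransition.one_of_one_le (le_of_lt hy))
  · exact (hB ⟨x, ⟨h, h'⟩, rfl⟩).trans (le_max_left _ _)

lemma step_Bd (k : ℕ) : ∃ B : ℕ, 1 ≤ B ∧ ∀ i, 1 ≤ i → i ≤ k → ∀ x,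
    ‖iteratedFDeriv ℝ i Real.smoothTransition x‖ ≤ B := by
  induction k with
  | zero => exact ⟨1, le_rfl, fun i h1 h2 => by omega⟩
  | succ k ih =>
    obtain ⟨B, hB1, hB⟩ := ih
    obtain ⟨B', hB'⟩ := step_bound (k+1) (by omega)
    obtain ⟨n, hn⟩ := exists_nat_ge B'
    refine ⟨B + n, by omega, fun i h1 hi x => ?_⟩
    push_cast
    rcases Nat.lt_or_ge i (k+1) with h | h
    · have := hB i h1 (by omega) x
      have : (0:ℝ) ≤ n := by positivity
      linarith
    · obtain rfl : i = k+1 := by omega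
      have := hB' x
      have : (0:ℝ) ≤ B := by positivity
      linarith

/-- lift of the degree one step map -/
noncomputable def eR (s : ℕ) (y : ℝ) : ℝ := ⌊y⌋ + Real.smoothTransition (s * Int.fract y)

noncomputable def gR (q s : ℕ) (y : ℝ) : ℝ := (y - eR s y) / q

lemma eR_add_one (s : ℕ) (y : ℝ) : eR s (y + 1) = eR s y + 1 := by
  simp [eR]; ring

lemma gR_periodic (q s : ℕ) : Function.Periodic (gR q s) 1 := by
  intro y
  simp only [gR, eR_add_one]
  ring

lemma abs_gR_le (q s : ℕ) (y : ℝ) : |gR q s y| ≤ 1 / q := by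
  have h1 := Real.smoothTransition.le_one (s * Int.fract y)
  have h2 := Real.smoothTransition.nonneg (s * Int.fract y)
  have h3 := Int.fract_nonneg y
  have h4 := Int.fract_lt_one y
  have h5 := Int.floor_add_fract y
  rw [gR, abs_div, Nat.abs_cast]
  gcongr
  rw [abs_le, eR]
  constructor <;> linarith

lemma eR_local {s : ℕ} (hs : 2 ≤ s) (k : ℤ) {y : ℝ} (h1 : (k:ℝ) - 1/2 < y) (h2 : y < k + 1) :
    eR s y = k + Real.smoothTransition (s * (y - k)) := by
  have hs' : (2:ℝ) ≤ s := by exact_mod_cast hs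
  rcases lt_or_ge y k with h | h
  · have hf : ⌊y⌋ = k - 1 := by
      rw [Int.floor_eq_iff]; push_cast; constructor <;> linarith
    have : Int.fract y = y - (k - 1) := by
      rw [Int.fract, hf]; push_cast; ring
    rw [eR, this, hf, Real.smoothTransition.one_of_one_le (by nlinarith),
      Real.smoothTransition.zero_of_nonpos (by nlinarith)]
    push_cast; ring
  · have hf : ⌊y⌋ = k := by
      rw [Int.floor_eq_iff]; constructor <;> linarith
    rw [eR, Int.fract, hf]

lemma eR_eventually {s : ℕ} (hs : 2 ≤ s) (y : ℝ) :
    eR s =ᶠ[𝓝 y] fun z => (⌊y⌋ : ℝ) + Real.smoothTransition (s * (z - ⌊y⌋)) := by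
  have h1 := Int.floor_le y
  have h2 := Int.lt_floor_add_one y
  filter_upwards [Ioo_mem_nhds (show (⌊y⌋:ℝ) - 1/2 < y by linarith) h2] with z hz
  exact eR_local hs _ hz.1 hz.2

lemma eR_contDiff {s : ℕ} (hs : 2 ≤ s) : ContDiff ℝ ∞ (eR s) := by
  rw [contDiff_iff_contDiffAt]
  intro y
  refine ContDiffAt.congr_of_eventuallyEq ?_ (eR_eventually hs y)
  have h : ContDiff ℝ ∞ fun z : ℝ =>
      (⌊y⌋ : ℝ) + Real.smoothTransition (s * (z - ⌊y⌋)) := by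
    refine contDiff_const.add (Real.smoothTransition.contDiff.comp ?_)
    fun_prop
  exact h.contDiffAt

lemma Bd_affine (k : ℕ) (s : ℕ) (c : ℝ) : Bd k s (fun z : ℝ => (s:ℝ) * (z - c)) := by
  have h : Bd k (s:ℝ) ((s:ℝ) • ContinuousLinearMap.id ℝ ℝ) := Bd_clm k _ (by
    rw [norm_smul, ContinuousLinearMap.norm_id]; simp)
  refine ⟨by fun_prop, fun i h1 hi x => ?_⟩
  have := h.2 i h1 hi x
  rw [← iteratedFDeriv_sub_const h.1 (s * c) h1] at this
  convert this using 5
  simp; ring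

lemma eR_bound {s k B : ℕ} (hs : 2 ≤ s)
    (hB : ∀ i, 1 ≤ i → i ≤ k → ∀ x, ‖iteratedFDeriv ℝ i Real.smoothTransition x‖ ≤ B) :
    ∀ i, 1 ≤ i → i ≤ k → ∀ x, ‖iteratedFDeriv ℝ i (eR s) x‖ ≤ k.factorial * B * (s:ℝ) ^ i := by
  intro i h1 hi x
  rw [((eR_eventually hs x).iteratedFDeriv ℝ i).eq_of_nhds]
  have hsm : ContDiff ℝ ∞ Real.smoothTransition := Real.smoothTransition.contDiff
  have ha := Bd_affine k s ⌊x⌋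
  have h := comp_bound hsm ha.1 h1 x (C := B) (D := s) (by positivity)
    (fun j hj hji y => hB j hj (hji.trans hi) y) (fun j hj hji => ha.2 j hj (hji.trans hi) x)
  have h2 := iteratedFDeriv_sub_const (hsm.comp ha.1) (-(⌊x⌋:ℝ)) h1 x
  have h3 : (fun y => (Real.smoothTransition ∘ fun z : ℝ => (s:ℝ) * (z - ⌊x⌋)) y - -(⌊x⌋:ℝ))
    = fun z => (⌊x⌋ : ℝ) + Real.smoothTransition (s * (z - ⌊x⌋)) := by
    ext z; simp; ring
  rw [h3] at h2
  rw [h2]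
  refine h.trans ?_
  gcongr

lemma eR_lip {s B : ℕ} (hs : 2 ≤ s)
    (hB : ∀ x, ‖iteratedFDeriv ℝ 1 Real.smoothTransition x‖ ≤ B) (x y : ℝ) :
    |eR s x - eR s y| ≤ B * s * |x - y| := by
  have h := eR_bound (k := 1) (B := B) hs (fun i h1 hi x => by
    obtain rfl : i = 1 := by omega
    exact hB x) 1 le_rfl le_rfl
  have h2 := convex_univ.norm_image_sub_le_of_norm_fderiv_le (𝕜 := ℝ) (f := eR s) (C := B * s)
    (fun z _ => (eR_contDiff hs).differentiable (by simp) z)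
    (fun z _ => by
      have := h z
      rw [norm_iteratedFDeriv_one] at this
      simpa using this) (mem_univ y) (mem_univ x)
  simpa [Real.norm_eq_abs] using h2

lemma gR_contDiff (q : ℕ) {s : ℕ} (hs : 2 ≤ s) : ContDiff ℝ ∞ (gR q s) :=
  (contDiff_id.sub (eR_contDiff hs)).div_const _


end AbC


open MeasureTheory Filter Set
open scoped Topology ENNReal NNReal ContDiff

namespace AbC

/-- the horizontal shear on the plane -/
noncomputable def uR (q s : ℕ) (σ : ℝ) (p : ℝ × ℝ) : ℝ × ℝ := (p.1 + σ * gR q s p.2, p.2)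

/-- the vertical shear on the plane -/
noncomputable def vR (c : ℝ) : ℝ × ℝ →L[ℝ] ℝ × ℝ :=
  (ContinuousLinearMap.fst ℝ ℝ ℝ).prod
    (ContinuousLinearMap.snd ℝ ℝ ℝ + c • ContinuousLinearMap.fst ℝ ℝ ℝ)

lemma vR_apply (c : ℝ) (p : ℝ × ℝ) : vR c p = (p.1, p.2 + c * p.1) := by
  simp [vR]

lemma vR_norm (c : ℝ) : ‖vR c‖ ≤ 1 + |c| := by
  refine ContinuousLinearMap.opNorm_le_bound _ (by positivity) fun p => ?_
  rw [vR_apply, Prod.norm_mk]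
  have h1 : ‖p.1‖ ≤ ‖p‖ := norm_fst_le p
  have h2 : ‖p.2‖ ≤ ‖p‖ := norm_snd_le p
  have h3 : 0 ≤ |c| := abs_nonneg c
  refine max_le ?_ ?_
  · nlinarith [norm_nonneg p]
  · refine (norm_add_le _ _).trans ?_
    rw [norm_mul, Real.norm_eq_abs c]
    nlinarith

lemma gR_bound (q : ℕ) {s k B : ℕ} (hq : 1 ≤ q) (hs : 2 ≤ s)
    (hB : ∀ i, 1 ≤ i → i ≤ k → ∀ x, ‖iteratedFDeriv ℝ i Real.smoothTransition x‖ ≤ B) :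
    ∀ i, 1 ≤ i → i ≤ k → ∀ x,
      ‖iteratedFDeriv ℝ i (gR q s) x‖ ≤ 1 + k.factorial * B * (s:ℝ) ^ i := by
  intro i h1 hi x
  have he := eR_bound hs hB i h1 hi x
  have hid : ‖iteratedFDeriv ℝ i (id : ℝ → ℝ) x‖ ≤ 1 := by
    have := (Bd_clm k (ContinuousLinearMap.id ℝ ℝ) (M := 1) (by simp)).2 i h1 hi x
    simpa using this
  have hsub : ‖iteratedFDeriv ℝ i ((id : ℝ → ℝ) - eR s) x‖ ≤ 1 + k.factorial * B * (s:ℝ) ^ i := by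
    rw [iteratedFDeriv_sub_apply (contDiff_id.contDiffAt)
      (ContDiff.toNat (eR_contDiff hs) i).contDiffAt]
    exact (norm_sub_le _ _).trans (add_le_add hid he)
  have hfun : gR q s = ((q:ℝ)⁻¹ • ContinuousLinearMap.id ℝ ℝ) ∘ ((id : ℝ → ℝ) - eR s) := by
    ext y; simp [gR]; ring
  rw [hfun]
  have hcd : ContDiffAt ℝ i ((id : ℝ → ℝ) - eR s) x :=
    (contDiff_id.sub (ContDiff.toNat (eR_contDiff hs) i)).contDiffAt
  have h3 := ContinuousLinearMap.norm_iteratedFDeriv_comp_left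
    ((q:ℝ)⁻¹ • ContinuousLinearMap.id ℝ ℝ) hcd le_rfl
  refine h3.trans ?_
  have h4 : ‖(q:ℝ)⁻¹ • ContinuousLinearMap.id ℝ ℝ‖ ≤ 1 := by
    rw [norm_smul, ContinuousLinearMap.norm_id, mul_one, norm_inv, Real.norm_natCast]
    exact inv_le_one_of_one_le₀ (by exact_mod_cast hq)
  calc _ ≤ 1 * ‖iteratedFDeriv ℝ i ((id : ℝ → ℝ) - eR s) x‖ := by gcongr
    _ ≤ _ := by rw [one_mul]; exact hsub

lemma uR_Bd (q : ℕ) {s k B : ℕ} (hq : 1 ≤ q) (hs : 2 ≤ s) {σ : ℝ} (hσ : |σ| ≤ 1)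
    (hB : ∀ i, 1 ≤ i → i ≤ k → ∀ x, ‖iteratedFDeriv ℝ i Real.smoothTransition x‖ ≤ B) :
    Bd k ((2 + k.factorial * B) * s : ℝ) (uR q s σ) := by
  have hg := gR_contDiff q hs
  have hc : ContDiff ℝ ∞ (uR q s σ) := by
    unfold uR
    have h2 : ContDiff ℝ ∞ (fun p : ℝ × ℝ => gR q s p.2) := hg.comp contDiff_snd
    exact (contDiff_fst.add (contDiff_const.mul h2)).prodMk contDiff_snd
  refine ⟨hc, fun i h1 hi x => ?_⟩
  let J : ℝ →L[ℝ] ℝ × ℝ := σ • ContinuousLinearMap.inl ℝ ℝ ℝ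
  have hJ : ‖J‖ ≤ 1 := by
    refine ContinuousLinearMap.opNorm_le_bound _ (by positivity) fun p => ?_
    simp only [J, smul_apply, ContinuousLinearMap.inl_apply, Prod.smul_mk,
      Prod.norm_mk, norm_zero, smul_eq_mul, norm_mul, Real.norm_eq_abs]
    refine max_le ?_ (by simp)
    nlinarith [abs_nonneg p]
  let S : ℝ × ℝ →L[ℝ] ℝ := ContinuousLinearMap.snd ℝ ℝ ℝ
  have hS : ‖S‖ ≤ 1 := ContinuousLinearMap.norm_snd_le ℝ ℝ ℝ
  have hfun : uR q s σ = (id : ℝ × ℝ → ℝ × ℝ) + (J ∘ (gR q s ∘ S)) := by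
    ext p <;> simp [uR, J, S]
  have hid : ‖iteratedFDeriv ℝ i (id : ℝ × ℝ → ℝ × ℝ) x‖ ≤ 1 := by
    have := (Bd_clm k (ContinuousLinearMap.id ℝ (ℝ × ℝ)) (M := 1)
      (ContinuousLinearMap.norm_id_le)).2 i h1 hi x
    simpa using this
  have hgS : ContDiff ℝ ∞ (gR q s ∘ S) := hg.comp S.contDiff
  rw [hfun, iteratedFDeriv_add_apply contDiff_id.contDiffAt
    (ContDiff.toNat (J.contDiff.comp hgS) i).contDiffAt]
  have h3 := ContinuousLinearMap.norm_iteratedFDeriv_comp_left J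
    (ContDiff.toNat hgS i).contDiffAt (x := x) le_rfl
  have h4 : ‖iteratedFDeriv ℝ i (gR q s ∘ S) x‖ ≤ 1 + k.factorial * B * (s:ℝ) ^ i := by
    rw [ContinuousLinearMap.iteratedFDeriv_comp_right S (ContDiff.toNat hg i) x le_rfl]
    refine (ContinuousMultilinearMap.norm_compContinuousLinearMap_le _ _).trans ?_
    rw [Finset.prod_const, Finset.card_univ, Fintype.card_fin]
    have := gR_bound q hq hs hB i h1 hi (S x)
    calc _ ≤ ‖iteratedFDeriv ℝ i (gR q s) (S x)‖ * 1 := by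
          gcongr
          exact pow_le_one₀ (norm_nonneg _) hS
      _ ≤ _ := by rw [mul_one]; exact this
  have h5 : ‖J‖ * ‖iteratedFDeriv ℝ i (gR q s ∘ S) x‖ ≤ 1 + k.factorial * B * (s:ℝ) ^ i :=
    (mul_le_of_le_one_left (norm_nonneg _) hJ).trans h4
  refine (norm_add_le _ _).trans ((add_le_add hid (h3.trans h5)).trans ?_)
  have hs1 : (1:ℝ) ≤ s := by exact_mod_cast (by omega : 1 ≤ s)
  have h6 : (1:ℝ) ≤ (s:ℝ) ^ i := one_le_pow₀ hs1
  have h7 : (2 + k.factorial * B : ℝ) ≤ (2 + k.factorial * B : ℝ) ^ i :=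
    le_self_pow₀ (by have : (0:ℝ) ≤ k.factorial * B := by positivity
                     linarith) (by omega)
  rw [mul_pow]
  calc (1:ℝ) + (1 + k.factorial * B * (s:ℝ) ^ i) ≤ (2 + k.factorial * B) * (s:ℝ) ^ i := by
        nlinarith
    _ ≤ _ := by gcongr

/-- parameters of the construction -/
structure Hyp (K d B : ℕ) (q s : ℕ → ℕ) : Prop where
  hK : 2 ≤ K
  hd : d + 4 = K ^ 5
  hB1 : 1 ≤ B
  hB : ∀ i, 1 ≤ i → i ≤ K → ∀ x, ‖iteratedFDeriv ℝ i Real.smoothTransition x‖ ≤ B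
  q_succ : ∀ n, q (n+1) = q n ^ d
  s_eq : ∀ n, s n = q n ^ (d - 3)
  q0 : 1000 ≤ q 0
  c1 : B + 2 ≤ q 0
  c2 : K.factorial ^ 2 * 2 ^ K * (2 + K.factorial * B) ≤ q 0
  c3 : K.factorial * (K.factorial ^ K * (2 + K.factorial * B) ^ (K * K) * 2 ^ K) ≤ q 0

namespace Hyp
variable {K d B : ℕ} {q s : ℕ → ℕ} (h : Hyp K d B q s)
include h

lemma d_lb : K ^ 3 + 2 * K + 3 ≤ d ∧ 3 * K ≤ d ∧ 28 ≤ d := by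
  have h1 := h.hd
  have h2 := h.hK
  have h3 : K ^ 5 = K ^ 3 * (K * K) := by ring
  have h4 : 4 ≤ K * K := by nlinarith
  have h5 : K ^ 3 * 4 ≤ K ^ 3 * (K * K) := Nat.mul_le_mul_left _ h4
  have h6 : 4 * K ≤ K ^ 3 := by nlinarith [show K ^ 3 = K * (K * K) by ring]
  have h7 : 2 ^ 5 ≤ K ^ 5 := Nat.pow_le_pow_left h2 5
  refine ⟨by omega, by omega, by omega⟩

lemma q_ge (n : ℕ) : 1000 ≤ q n ∧ q 0 ≤ q n := by
  induction n with
  | zero => exact ⟨h.q0, le_rfl⟩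
  | succ n ih =>
    have := h.d_lb
    have h2 : q n ≤ q n ^ d := Nat.le_self_pow (by omega) _
    rw [h.q_succ]
    omega

lemma q_pos (n : ℕ) : (0:ℝ) < q n := by
  have := (h.q_ge n).1
  exact_mod_cast (by omega : 0 < q n)

lemma q_ge1000 (n : ℕ) : (1000:ℝ) ≤ q n := by exact_mod_cast (h.q_ge n).1

lemma s_ge (n : ℕ) : q n ≤ s n := by
  have := h.d_lb
  rw [h.s_eq]
  exact Nat.le_self_pow (by omega) _

/-- multiplicative form -/
lemma s_mul (n : ℕ) : s n * q n ^ 3 = q (n+1) := by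
  have := h.d_lb
  rw [h.s_eq, h.q_succ, ← pow_add]
  congr 1; omega

lemma q_mono_mul (n : ℕ) : q n ^ 4 * q n ≤ q (n+1) := by
  have := h.d_lb
  rw [h.q_succ, ← pow_succ]
  exact Nat.pow_le_pow_right (by have := (h.q_ge n).1; omega) (by omega)

lemma two_pow_le (n : ℕ) : 2 ^ n ≤ q n := by
  induction n with
  | zero => have := (h.q_ge 0).1; simp; omega
  | succ n ih =>
    have h1 := h.q_mono_mul n
    have h2 := (h.q_ge n).1
    have h3 : 2 ≤ q n ^ 4 := by
      calc 2 ≤ q n := by omega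
        _ ≤ q n ^ 4 := Nat.le_self_pow (by omega) _
    calc 2 ^ (n+1) = 2 * 2 ^ n := by ring
      _ ≤ q n ^ 4 * q n := Nat.mul_le_mul h3 ih
      _ ≤ _ := h1

lemma inv_q_le (n : ℕ) : 1 / (q n : ℝ) ≤ (1/2) ^ n := by
  rw [one_div_pow]
  apply one_div_le_one_div_of_le (by positivity)
  exact_mod_cast h.two_pow_le n

lemma inv_q_tendsto : Tendsto (fun n => 1 / (q n : ℝ)) atTop (𝓝 0) := by
  refine squeeze_zero (fun n => by positivity) h.inv_q_le ?_
  exact tendsto_pow_atTop_nhds_zero_of_lt_one (by norm_num) (by norm_num)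

end Hyp

/-! ### lifts -/

noncomputable def hL (q s : ℕ) (p : ℝ × ℝ) : ℝ × ℝ := vR (-q) (uR q s 1 p)
noncomputable def hLi (q s : ℕ) (p : ℝ × ℝ) : ℝ × ℝ := uR q s (-1) (vR q p)

noncomputable def HL (q s : ℕ → ℕ) : ℕ → ℝ × ℝ → ℝ × ℝ
  | 0 => fun p => p
  | n+1 => HL q s n ∘ hL (q n) (s n)

noncomputable def HLi (q s : ℕ → ℕ) : ℕ → ℝ × ℝ → ℝ × ℝ
  | 0 => fun p => p
  | n+1 => hLi (q n) (s n) ∘ HLi q s n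

section
variable {K d B : ℕ} {q s : ℕ → ℕ} (h : Hyp K d B q s)
include h

lemma hL_Bd (n : ℕ) : Bd K (K.factorial * (1 + q n) ^ K * ((2 + K.factorial * B) * s n) : ℝ)
    (hL (q n) (s n)) := by
  have h1 := (h.q_ge n).1
  have h2 := h.s_ge n
  refine Bd.comp (g := vR (-(q n : ℝ))) (by positivity) ?_ (Bd_clm K _ ?_)
    (uR_Bd _ (by omega) (by omega) (by simp) h.hB)
  · have := h.q_pos n; linarith
  · exact (vR_norm _).trans (by simp)

lemma hLi_Bd (n : ℕ) : Bd K (K.factorial * ((2 + K.factorial * B) * s n) ^ K * (1 + q n) : ℝ)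
    (hLi (q n) (s n)) := by
  have h1 := (h.q_ge n).1
  have h2 := h.s_ge n
  refine Bd.comp (f := vR (q n : ℝ)) (by positivity) ?_ 
    (uR_Bd _ (by omega) (by omega) (by simp) h.hB) (Bd_clm K _ ?_)
  · have : (1:ℝ) ≤ s n := by exact_mod_cast (by omega : 1 ≤ s n)
    have : (0:ℝ) ≤ K.factorial * B := by positivity
    nlinarith
  · exact (vR_norm _).trans (by simp)

lemma HL_Bd (n : ℕ) : Bd K ((q n : ℝ) ^ 2) (HL q s n) := by
  induction n with
  | zero =>
    refine (Bd_clm K (ContinuousLinearMap.id ℝ (ℝ × ℝ)) (M := 1)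
      (ContinuousLinearMap.norm_id_le)).mono (by norm_num) ?_
    have := h.q_ge1000 0
    nlinarith
  | succ n ih =>
    have hq := h.q_ge1000 n
    refine (Bd.comp (by positivity) (by nlinarith) ih (hL_Bd h n)).mono (by positivity) ?_
    have hc : (K.factorial ^ 2 * 2 ^ K * (2 + K.factorial * B) : ℝ) ≤ q n := by
      exact_mod_cast h.c2.trans (h.q_ge n).2
    have hs : (s n : ℝ) = (q n : ℝ) ^ (d - 3) := by exact_mod_cast h.s_eq n
    have hq1 : ((q (n+1) : ℕ) : ℝ) = (q n : ℝ) ^ d := by exact_mod_cast h.q_succ n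
    have hd := h.d_lb
    calc (K.factorial : ℝ) * ((q n : ℝ) ^ 2) ^ K *
          (K.factorial * (1 + q n) ^ K * ((2 + K.factorial * B) * s n))
        ≤ (K.factorial : ℝ) * ((q n : ℝ) ^ 2) ^ K *
          (K.factorial * (2 * q n) ^ K * ((2 + K.factorial * B) * s n)) := by
          gcongr; linarith
      _ = (K.factorial ^ 2 * 2 ^ K * (2 + K.factorial * B) : ℝ) *
          ((q n : ℝ) ^ (2 * K) * (q n : ℝ) ^ K * (q n : ℝ) ^ (d - 3)) := by
          rw [hs, mul_pow, ← pow_mul]; ring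
      _ ≤ (q n : ℝ) * ((q n : ℝ) ^ (2 * K) * (q n : ℝ) ^ K * (q n : ℝ) ^ (d - 3)) := by gcongr
      _ = (q n : ℝ) ^ (1 + (2 * K + K + (d - 3))) := by
          rw [← pow_add, ← pow_add, pow_add _ 1, pow_one]
      _ ≤ (q n : ℝ) ^ (d * 2) := by
          apply pow_le_pow_right₀ (by linarith); omega
      _ = _ := by rw [hq1, pow_mul]

lemma HLi_Bd (n : ℕ) : Bd K ((q n : ℝ) ^ (K * K)) (HLi q s n) := by
  induction n with
  | zero =>
    refine (Bd_clm K (ContinuousLinearMap.id ℝ (ℝ × ℝ)) (M := 1)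
      (ContinuousLinearMap.norm_id_le)).mono (by norm_num) ?_
    have := h.q_ge1000 0
    exact one_le_pow₀ (by linarith)
  | succ n ih =>
    have hq := h.q_ge1000 n
    have hM : (1:ℝ) ≤ K.factorial * ((2 + K.factorial * B) * s n) ^ K * (1 + q n) := by
      have h1 : (1:ℝ) ≤ K.factorial := by
        exact_mod_cast Nat.one_le_iff_ne_zero.2 (Nat.factorial_ne_zero K)
      have h2 : (1:ℝ) ≤ s n := by
        have := (h.q_ge n).1; have := h.s_ge n
        exact_mod_cast (by omega : 1 ≤ s n)
      have h3 : (1:ℝ) ≤ ((2 + K.factorial * B) * s n) ^ K := by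
        apply one_le_pow₀
        have : (0:ℝ) ≤ K.factorial * B := by positivity
        nlinarith
      have h4 : (1:ℝ) ≤ 1 + q n := by linarith
      exact one_le_mul_of_one_le_of_one_le (one_le_mul_of_one_le_of_one_le h1 h3) h4
    refine (Bd.comp (by positivity) hM (hLi_Bd h n) ih).mono (by positivity) ?_
    have hc : (K.factorial * (K.factorial ^ K * (2 + K.factorial * B) ^ (K * K) * 2 ^ K) : ℝ)
        ≤ q n := by
      exact_mod_cast h.c3.trans (h.q_ge n).2
    have hs : (s n : ℝ) = (q n : ℝ) ^ (d - 3) := by exact_mod_cast h.s_eq n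
    have hq1 : ((q (n+1) : ℕ) : ℝ) = (q n : ℝ) ^ d := by exact_mod_cast h.q_succ n
    have hd := h.d_lb
    obtain ⟨e, rfl⟩ : ∃ e, d = e + 3 := ⟨d - 3, by omega⟩
    have hK := h.hK
    calc (K.factorial : ℝ) * (K.factorial * ((2 + K.factorial * B) * s n) ^ K * (1 + q n)) ^ K
          * (q n : ℝ) ^ (K * K)
        ≤ (K.factorial : ℝ) * (K.factorial * ((2 + K.factorial * B) * s n) ^ K * (2 * q n)) ^ K
          * (q n : ℝ) ^ (K * K) := by
          gcongr; linarith
      _ = (K.factorial * (K.factorial ^ K * (2 + K.factorial * B) ^ (K * K) * 2 ^ K) : ℝ) *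
          ((q n : ℝ) ^ (e * (K * K)) * (q n : ℝ) ^ K * (q n : ℝ) ^ (K * K)) := by
          rw [hs]
          simp only [mul_pow, ← pow_mul, Nat.add_sub_cancel]
          rw [show e * K * K = e * (K * K) by ring]
          ring
      _ ≤ (q n : ℝ) * ((q n : ℝ) ^ (e * (K * K)) * (q n : ℝ) ^ K * (q n : ℝ) ^ (K * K)) := by
          gcongr
      _ = (q n : ℝ) ^ (1 + (e * (K * K) + K + K * K)) := by
          rw [← pow_add, ← pow_add, pow_add _ 1, pow_one]
      _ ≤ (q n : ℝ) ^ ((e + 3) * (K * K)) := by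
          apply pow_le_pow_right₀ (by linarith)
          nlinarith
      _ = _ := by rw [hq1, pow_mul]

/-- The basic difference estimate. -/
lemma diff_bound (n : ℕ) (u v : ℝ × ℝ) (huv : ‖u - v‖ ≤ q n / q (n+1)) (k : ℕ) (hk : k + 1 ≤ K)
    (x : ℝ × ℝ) :
    ‖iteratedFDeriv ℝ k (fun p => HL q s n (HLi q s n p + u) - HL q s n (HLi q s n p + v)) x‖
      ≤ 1 / (q n : ℝ) := by
  have hH := HL_Bd h n
  have hHi := HLi_Bd h n
  have hq := h.q_ge1000 n
  have hcu : ContDiff ℝ ∞ (fun w => HL q s n (w + u)) := hH.1.comp (contDiff_id.add contDiff_const)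
  have hcv : ContDiff ℝ ∞ (fun w => HL q s n (w + v)) := hH.1.comp (contDiff_id.add contDiff_const)
  have hΔ : ∀ i, i ≤ k → ∀ w, ‖iteratedFDeriv ℝ i
      (fun w => HL q s n (w + u) - HL q s n (w + v)) w‖ ≤ (q n : ℝ) ^ (2 * K) * (q n / q (n+1)) := by
    intro i hi w
    have h1 := iteratedFDeriv_sub_apply (𝕜 := ℝ) (i := i) (x := w)
      (ContDiff.toNat hcu i).contDiffAt (ContDiff.toNat hcv i).contDiffAt
    have h2 : ((fun w => HL q s n (w + u)) - fun w => HL q s n (w + v))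
      = fun w => HL q s n (w + u) - HL q s n (w + v) := rfl
    rw [h2] at h1
    rw [h1, iteratedFDeriv_comp_add_right, iteratedFDeriv_comp_add_right]
    have h3 := convex_univ.norm_image_sub_le_of_norm_fderiv_le (𝕜 := ℝ)
      (f := iteratedFDeriv ℝ i (HL q s n)) (C := (q n : ℝ) ^ (2 * K)) (x := w + v) (y := w + u)
      (fun z _ => by
        refine ((ContDiff.toNat hH.1 (i+1)).differentiable_iteratedFDeriv ?_) z
        exact_mod_cast Nat.lt_succ_self i)
      (fun z _ => by
        rw [norm_fderiv_iteratedFDeriv]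
        refine (hH.2 (i+1) (by omega) (by omega) z).trans ?_
        rw [← pow_mul]
        apply pow_le_pow_right₀ (by linarith)
        omega) (mem_univ _) (mem_univ _)
    refine h3.trans ?_
    gcongr
    simpa using huv
  have hc := norm_iteratedFDeriv_comp_le (hcu.sub hcv) hHi.1
    (n := k) (by exact_mod_cast le_top) x
    (fun i hi => hΔ i hi _) (fun i h1 hi => hHi.2 i h1 (by omega) x)
  refine hc.trans ?_
  have hq1 : ((q (n+1) : ℕ) : ℝ) = (q n : ℝ) ^ d := by exact_mod_cast h.q_succ n
  have hd := h.d_lb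
  have hfac : (k.factorial : ℝ) ≤ q n := by
    have h1 : k.factorial ≤ K.factorial := Nat.factorial_le (by omega)
    have h2 : K.factorial ≤ K.factorial ^ 2 * 2 ^ K * (2 + K.factorial * B) := by
      have a1 : 1 ≤ K.factorial := Nat.one_le_iff_ne_zero.2 (Nat.factorial_ne_zero K)
      have a2 : 1 ≤ 2 ^ K := Nat.one_le_two_pow
      calc K.factorial = K.factorial * 1 * 1 := by ring
        _ ≤ K.factorial ^ 2 * 2 ^ K * (2 + K.factorial * B) := by
          gcongr
          · exact Nat.le_self_pow (by omega) _
          · omega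
    exact_mod_cast h1.trans (h2.trans (h.c2.trans (h.q_ge n).2))
  have hqn := h.q_pos n
  have hpow : ((q n : ℝ) ^ (K * K)) ^ k ≤ (q n : ℝ) ^ (K ^ 3) := by
    rw [← pow_mul]
    apply pow_le_pow_right₀ (by linarith)
    have : K * K * k ≤ K * K * K := Nat.mul_le_mul_left _ (by omega)
    calc _ ≤ _ := this
      _ = _ := by ring
  rw [hq1]
  calc (k.factorial : ℝ) * ((q n : ℝ) ^ (2 * K) * (q n / (q n : ℝ) ^ d)) * ((q n : ℝ) ^ (K * K)) ^ k
      ≤ (q n : ℝ) * ((q n : ℝ) ^ (2 * K) * (q n / (q n : ℝ) ^ d)) * (q n : ℝ) ^ (K ^ 3) := by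
        gcongr
    _ = (q n : ℝ) ^ (2 * K + K ^ 3 + 2) / (q n : ℝ) ^ d := by
        field_simp; ring
    _ ≤ 1 / q n := by
        rw [div_le_div_iff₀ (by positivity) hqn, one_mul, ← pow_succ]
        apply pow_le_pow_right₀ (by linarith)
        omega

end

end AbC


open MeasureTheory Filter Set
open scoped Topology ENNReal NNReal ContDiff

namespace AbC

lemma exists_rep (t : Torus1) : ∃ a : ℝ, (a : Torus1) = t ∧ ‖t‖ = |a| := by
  induction t using QuotientAddGroup.induction_on with
  | H a =>
    refine ⟨a - round a, ?_, ?_⟩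
    · have h1 : ((round a : ℝ) : Torus1) = 0 := by
        have := AddCircle.coe_period (1:ℝ)
        have h2 : ((round a : ℝ) : Torus1) = (round a) • ((1:ℝ) : Torus1) := by
          rw [← AddCircle.coe_zsmul]; simp
        rw [h2, this, smul_zero]
      rw [AddCircle.coe_sub, h1, sub_zero]
    · exact UnitAddCircle.norm_eq

lemma norm_coe_le (a : ℝ) : ‖(a : Torus1)‖ ≤ |a| := by
  have : ‖(a : Torus1)‖ = |a - round a| := UnitAddCircle.norm_eq
  rw [this]
  have := round_le a 0
  simpa using this

lemma coe_int_zero (m : ℤ) : ((m : ℝ) : Torus1) = 0 := by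
  have h2 : ((m : ℝ) : Torus1) = m • ((1:ℝ) : Torus1) := by
    rw [← AddCircle.coe_zsmul]; simp
  rw [h2, AddCircle.coe_period, smul_zero]

lemma dist_coe_le (a b : ℝ) : dist (a : Torus1) (b : Torus1) ≤ |a - b| := by
  rw [dist_eq_norm, ← AddCircle.coe_sub]; exact norm_coe_le _

lemma lift_dist_le {f : ℝ → ℝ} {F : Torus1 → Torus1} {C : ℝ}
    (hF : ∀ a : ℝ, F a = (f a : Torus1)) (hf : ∀ a b, |f a - f b| ≤ C * |a - b|)
    (x y : Torus1) : dist (F x) (F y) ≤ C * dist x y := by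
  obtain ⟨b, rfl⟩ := QuotientAddGroup.mk_surjective y
  obtain ⟨a, ha, hn⟩ := exists_rep (x - (b : Torus1))
  have hx : x = ((a + b : ℝ) : Torus1) := by rw [AddCircle.coe_add, ha]; abel
  have hd : dist x (b : Torus1) = |a| := by rw [dist_eq_norm, hn]
  change dist (F x) (F (b : Torus1)) ≤ C * dist x (b : Torus1)
  rw [hd, hx, hF, hF]
  refine (dist_coe_le _ _).trans ((hf _ _).trans ?_)
  simp

/-- circle version of `gR` -/
noncomputable def gT (q s : ℕ) : Torus1 → Torus1 :=
  Function.Periodic.lift (f := fun y : ℝ => ((gR q s y : ℝ) : Torus1)) (c := 1)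
    ((gR_periodic q s).comp _)

lemma gT_coe (q s : ℕ) (y : ℝ) : gT q s (y : Torus1) = ((gR q s y : ℝ) : Torus1) := rfl

lemma eT_per (s : ℕ) : Function.Periodic (fun y : ℝ => ((eR s y : ℝ) : Torus1)) 1 := by
  intro y
  simp only [eR_add_one]
  rw [AddCircle.coe_add, AddCircle.coe_period, add_zero]

/-- circle version of `eR` -/
noncomputable def eT (s : ℕ) : Torus1 → Torus1 :=
  Function.Periodic.lift (eT_per s)

lemma eT_coe (s : ℕ) (y : ℝ) : eT s (y : Torus1) = ((eR s y : ℝ) : Torus1) := rfl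

lemma eT_eq {q : ℕ} (hq : 1 ≤ q) (s : ℕ) (y : Torus1) : eT s y = y - q • gT q s y := by
  induction y using QuotientAddGroup.induction_on with
  | H y =>
    change eT s (y : Torus1) = (y : Torus1) - q • gT q s (y : Torus1)
    rw [gT_coe, eT_coe, ← AddCircle.coe_nsmul, ← AddCircle.coe_sub]
    congr 1
    have : (q:ℝ) ≠ 0 := by positivity
    simp [gR]; field_simp; ring

noncomputable def hT (q s : ℕ) (z : Torus2) : Torus2 := (z.1 + gT q s z.2, eT s z.2 - q • z.1)
noncomputable def hTi (q s : ℕ) (z : Torus2) : Torus2 :=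
  (z.1 - gT q s (z.2 + q • z.1), z.2 + q • z.1)

lemma hT_hTi {q : ℕ} (hq : 1 ≤ q) (s : ℕ) (z : Torus2) : hT q s (hTi q s z) = z := by
  ext
  · simp [hT, hTi]
  · simp only [hT, hTi, eT_eq hq, smul_sub]; abel

lemma hTi_hT {q : ℕ} (hq : 1 ≤ q) (s : ℕ) (z : Torus2) : hTi q s (hT q s z) = z := by
  have : eT s z.2 - q • z.1 + q • (z.1 + gT q s z.2) = z.2 := by
    simp only [eT_eq hq, smul_add]; abel
  ext
  · simp only [hT, hTi, this]; abel
  · simp only [hT, hTi, this]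

lemma hT_conj {q : ℕ} (hq : 1 ≤ q) (s : ℕ) (w : Torus2) (t : Torus1) :
    hT q s (hTi q s w + (t, 0)) = w + (t, - (q • t)) := by
  ext
  · simp [hT, hTi]; abel
  · simp only [hT, hTi, eT_eq hq, smul_sub, Prod.snd_add, Prod.fst_add, add_zero, smul_add]; abel

noncomputable def HT (q s : ℕ → ℕ) : ℕ → Torus2 → Torus2
  | 0 => fun p => p
  | n+1 => HT q s n ∘ hT (q n) (s n)

noncomputable def HTi (q s : ℕ → ℕ) : ℕ → Torus2 → Torus2
  | 0 => fun p => p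
  | n+1 => hTi (q n) (s n) ∘ HTi q s n

noncomputable def al (q : ℕ → ℕ) (n : ℕ) : ℝ := ∑ k ∈ Finset.range n, 1 / (q (k+1) : ℝ)

/-- conjugated translation -/
noncomputable def cj (q s : ℕ → ℕ) (n : ℕ) (t z : Torus2) : Torus2 := HT q s n (HTi q s n z + t)

noncomputable def P (q s : ℕ → ℕ) (n : ℕ) (i : ℤ) (z : Torus2) : Torus2 :=
  cj q s n (((i * al q n : ℝ) : Torus1), 0) z

section
variable {K d B : ℕ} {q s : ℕ → ℕ} (h : Hyp K d B q s)
include h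

lemma q1 (n : ℕ) : 1 ≤ q n := by have := (h.q_ge n).1; omega

lemma s2 (n : ℕ) : 2 ≤ s n := by have := (h.q_ge n).1; have := h.s_ge n; omega

lemma eT_lip (n : ℕ) (x y : Torus1) : dist (eT (s n) x) (eT (s n) y) ≤ B * s n * dist x y :=
  lift_dist_le (eT_coe _) (fun a b => eR_lip (s2 h n)
    (h.hB 1 le_rfl (by have := h.hK; omega)) a b) x y

lemma gT_lip (n : ℕ) (x y : Torus1) :
    dist (gT (q n) (s n) x) (gT (q n) (s n) y) ≤ (1 + B * s n) / q n * dist x y := by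
  refine lift_dist_le (gT_coe _ _) (fun a b => ?_) x y
  have h1 := eR_lip (s2 h n) (h.hB 1 le_rfl (by have := h.hK; omega)) a b
  have hq := h.q_pos n
  unfold gR
  rw [← sub_div, abs_div, abs_of_pos hq, div_mul_eq_mul_div]
  gcongr
  calc |a - eR (s n) a - (b - eR (s n) b)| = |(a - b) - (eR (s n) a - eR (s n) b)| := by ring_nf
    _ ≤ |a - b| + |eR (s n) a - eR (s n) b| := abs_sub _ _
    _ ≤ _ := by linarith

lemma hT_lip' (n : ℕ) (z w : Torus2) : dist (hT (q n) (s n) z) (hT (q n) (s n) w) ≤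
    q n * dist z.1 w.1 + (B + 1) * s n * dist z.2 w.2 := by
  have hq := h.q_ge1000 n
  have hs : (q n : ℝ) ≤ s n := by exact_mod_cast h.s_ge n
  have d1 : 0 ≤ dist z.1 w.1 := dist_nonneg
  have d2 : 0 ≤ dist z.2 w.2 := dist_nonneg
  have hB : (0:ℝ) ≤ B := by positivity
  rw [Prod.dist_eq]
  refine max_le ?_ ?_
  · simp only [hT]
    refine (dist_add_add_le _ _ _ _).trans ?_
    have := gT_lip h n z.2 w.2
    have h2 : (1 + B * (s n : ℝ)) / q n ≤ (B + 1) * s n := by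
      rw [div_le_iff₀ (by linarith)]
      have : (1:ℝ) + B * s n ≤ (B+1) * s n := by linarith
      have h0 : (0:ℝ) ≤ (B+1) * s n := by positivity
      nlinarith
    have h3 := mul_le_mul_of_nonneg_right h2 d2
    nlinarith
  · simp only [hT]
    refine (dist_sub_sub_le _ _ _ _).trans ?_
    have := eT_lip h n z.2 w.2
    have h2 : dist (q n • z.1) (q n • w.1) ≤ q n * dist z.1 w.1 := by
      rw [dist_eq_norm, ← smul_sub, dist_eq_norm]
      exact norm_nsmul_le
    have h3 : 0 ≤ (s n : ℝ) * dist z.2 w.2 := by positivity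
    nlinarith

lemma hT_lip (n : ℕ) (z w : Torus2) : dist (hT (q n) (s n) z) (hT (q n) (s n) w) ≤
    (B + 2) * s n * dist z w := by
  have hs : (q n : ℝ) ≤ s n := by exact_mod_cast h.s_ge n
  have hq := h.q_ge1000 n
  refine (hT_lip' h n z w).trans ?_
  have d1 : dist z.1 w.1 ≤ dist z w := le_max_left _ _
  have d2 : dist z.2 w.2 ≤ dist z w := le_max_right _ _
  calc _ ≤ (s n : ℝ) * dist z w + (B+1) * s n * dist z w := by gcongr
    _ = _ := by ring

lemma s_mulR (n : ℕ) : (s n : ℝ) * (q n) ^ 3 = q (n+1) := by exact_mod_cast h.s_mul n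

lemma HT_lip_aux (n : ℕ) (hn : ∀ z w, dist (HT q s n z) (HT q s n w) ≤ q n * dist z w)
    (z w : Torus2) : dist (HT q s (n+1) z) (HT q s (n+1) w) ≤ q (n+1) / q n * dist z w := by
  have hq := h.q_pos n
  refine (hn _ _).trans ?_
  have h1 := hT_lip h n z w
  have hc : (B + 2 : ℝ) ≤ q n := by exact_mod_cast h.c1.trans (h.q_ge n).2
  have h2 : (q (n+1) : ℝ) / q n = q n * (q n * s n) := by
    rw [← s_mulR h n]; field_simp
  rw [h2, mul_assoc]
  gcongr
  refine h1.trans ?_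
  gcongr

lemma HT_lip (n : ℕ) : ∀ z w, dist (HT q s n z) (HT q s n w) ≤ q n * dist z w := by
  induction n with
  | zero =>
    intro z w
    have := h.q_ge1000 0
    have h1 : 0 ≤ dist z w := dist_nonneg
    simp only [HT]; nlinarith
  | succ n ih =>
    intro z w
    refine (HT_lip_aux h n ih z w).trans ?_
    gcongr
    apply div_le_self (by positivity)
    have := h.q_ge1000 n; linarith

lemma HT_lip_succ (n : ℕ) (z w : Torus2) :
    dist (HT q s (n+1) z) (HT q s (n+1) w) ≤ q (n+1) / q n * dist z w :=
  HT_lip_aux h n (HT_lip h n) z w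

lemma gT_cont (n : ℕ) : Continuous (gT (q n) (s n)) :=
  (LipschitzWith.of_dist_le_mul (K := Real.toNNReal ((1 + B * s n) / q n)) (fun x y => by
    rw [Real.coe_toNNReal _ (by positivity)]; exact gT_lip h n x y)).continuous

lemma eT_cont (n : ℕ) : Continuous (eT (s n)) :=
  (LipschitzWith.of_dist_le_mul (K := Real.toNNReal (B * s n)) (fun x y => by
    rw [Real.coe_toNNReal _ (by positivity)]; exact eT_lip h n x y)).continuous

lemma hT_cont (n : ℕ) : Continuous (hT (q n) (s n)) := by
  have h1 := gT_cont h n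
  have h2 := eT_cont h n
  unfold hT
  fun_prop

lemma hTi_cont (n : ℕ) : Continuous (hTi (q n) (s n)) := by
  have h1 := gT_cont h n
  unfold hTi
  fun_prop

lemma HT_cont (n : ℕ) : Continuous (HT q s n) := by
  induction n with
  | zero => exact continuous_id
  | succ n ih => exact ih.comp (hT_cont h n)

lemma HTi_cont (n : ℕ) : Continuous (HTi q s n) := by
  induction n with
  | zero => exact continuous_id
  | succ n ih => exact (hTi_cont h n).comp ih

lemma HT_HTi (n : ℕ) (z : Torus2) : HT q s n (HTi q s n z) = z := by
  induction n with
  | zero => rfl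
  | succ n ih => simp only [HT, HTi, Function.comp_apply, hT_hTi (q1 h n), ih]

lemma HTi_HT (n : ℕ) (z : Torus2) : HTi q s n (HT q s n z) = z := by
  induction n generalizing z with
  | zero => rfl
  | succ n ih => simp only [HT, HTi, Function.comp_apply, hTi_hT (q1 h n), ih]

lemma cj_add (n : ℕ) (t t' z : Torus2) : cj q s n (t + t') z = cj q s n t (cj q s n t' z) := by
  simp only [cj, HTi_HT h]; congr 1; abel

lemma cj_zero (n : ℕ) (z : Torus2) : cj q s n 0 z = z := by
  simp only [cj, add_zero, HT_HTi h]

lemma cj_cont (n : ℕ) (t : Torus2) : Continuous (cj q s n t) :=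
  (HT_cont h n).comp ((HTi_cont h n).add continuous_const)

lemma cj_succ (n : ℕ) (t : Torus1) (z : Torus2) :
    cj q s (n+1) (t, 0) z = cj q s n (t, -(q n • t)) z := by
  simp only [cj, HT, HTi, Function.comp_apply, hT_conj (q1 h n)]

lemma cj_dist (n : ℕ) (t t' z : Torus2) :
    dist (cj q s n t z) (cj q s n t' z) ≤ q n * dist t t' := by
  refine (HT_lip h n _ _).trans ?_
  rw [dist_add_left]

lemma q_mul_al (n : ℕ) : ∃ m : ℤ, (q n : ℝ) * al q n = m := by
  induction n with
  | zero => exact ⟨0, by simp [al]⟩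
  | succ n ih =>
    obtain ⟨m, hm⟩ := ih
    have hq := h.q_pos (n+1)
    have h1 : (q (n+1) : ℝ) = (s n * q n ^ 2 : ℕ) * q n := by
      rw [← s_mulR h n]; push_cast; ring
    refine ⟨(s n * q n ^ 2 : ℕ) * m + 1, ?_⟩
    have h2 : al q (n+1) = al q n + 1 / q (n+1) := by simp [al, Finset.sum_range_succ]
    rw [h2, mul_add, mul_one_div_cancel hq.ne', h1]
    push_cast
    rw [← hm]; ring

lemma al_succ (n : ℕ) : al q (n+1) = al q n + 1 / q (n+1) := by simp [al, Finset.sum_range_succ]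

lemma q_smul_al (n : ℕ) (i : ℤ) : q n • ((i * al q (n+1) : ℝ) : Torus1)
    = ((i * (q n / q (n+1)) : ℝ) : Torus1) := by
  obtain ⟨m, hm⟩ := q_mul_al h n
  rw [← AddCircle.coe_nsmul, al_succ h]
  have : q n • ((i:ℝ) * (al q n + 1 / q (n+1))) = ((i * m : ℤ) : ℝ) + i * (q n / q (n+1)) := by
    push_cast; rw [← hm, nsmul_eq_mul]; ring
  rw [this, AddCircle.coe_add, coe_int_zero, zero_add]

/-- level `n` description of the level `n+1` map -/
lemma P_succ (n : ℕ) (i : ℤ) (z : Torus2) : P q s (n+1) i z =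
    cj q s n (((i * al q (n+1) : ℝ) : Torus1), ((- (i * (q n / q (n+1))) : ℝ) : Torus1)) z := by
  unfold P
  rw [cj_succ h, q_smul_al h, AddCircle.coe_neg]

lemma P_add (n : ℕ) (i j : ℤ) (z : Torus2) : P q s n (i + j) z = P q s n i (P q s n j z) := by
  unfold P
  rw [← cj_add h]
  congr 1
  ext
  · simp only [Prod.mk_add_mk]; rw [← AddCircle.coe_add]; push_cast; ring_nf
  · simp

lemma P_zero (n : ℕ) (z : Torus2) : P q s n 0 z = z := by
  unfold P
  have : ((((0:ℤ) * al q n : ℝ) : Torus1), (0 : Torus1)) = 0 := by simp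
  rw [this, cj_zero h]

lemma P_cont (n : ℕ) (i : ℤ) : Continuous (P q s n i) := cj_cont h n _

lemma P_dist_succ (n : ℕ) (i : ℤ) (z : Torus2) :
    dist (P q s n i z) (P q s (n+1) i z) ≤ |(i:ℝ)| * ((q n : ℝ) ^ 2 / q (n+1)) := by
  rw [P_succ h]
  unfold P
  refine (cj_dist h n _ _ z).trans ?_
  have hq := h.q_ge1000 n
  have hq1 := h.q_pos (n+1)
  have : dist ((((i * al q n : ℝ) : Torus1), (0 : Torus1)))
      (((i * al q (n+1) : ℝ) : Torus1), ((- (i * (q n / q (n+1))) : ℝ) : Torus1)) ≤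
      |(i:ℝ)| * ((q n : ℝ) / q (n+1)) := by
    rw [Prod.dist_eq]
    refine max_le ?_ ?_
    · refine (dist_coe_le _ _).trans ?_
      rw [al_succ h, ← mul_sub, abs_mul]
      gcongr
      rw [sub_add_cancel_left, abs_neg, abs_of_pos (by positivity)]
      gcongr; linarith
    · simp only
      rw [dist_comm, dist_zero_right]
      refine (norm_coe_le _).trans ?_
      rw [abs_neg, abs_mul, abs_of_pos (a := (q n : ℝ) / _) (by positivity)]
  calc _ ≤ (q n : ℝ) * (|(i:ℝ)| * ((q n : ℝ) / q (n+1))) := by gcongr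
    _ = _ := by ring

/-- error constants -/
lemma c_half (n : ℕ) : 2 * ((q (n+1) : ℝ) ^ 2 / q (n+2)) ≤ (q n : ℝ) ^ 2 / q (n+1) := by
  have hq := h.q_ge1000 n
  have hq1 := h.q_ge1000 (n+1)
  have hq2 := h.q_pos (n+2)
  have h1 : (q (n+1) : ℝ) ^ 4 * q (n+1) ≤ q (n+2) := by exact_mod_cast h.q_mono_mul (n+1)
  rw [← mul_div_assoc, div_le_div_iff₀ hq2 (by linarith)]
  have h2 : 2 * (q (n+1) : ℝ) ^ 2 * q (n+1) ≤ q (n+1) ^ 4 * q (n+1) := by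
    have : 2 * (q (n+1) : ℝ) ^ 2 ≤ q (n+1) ^ 4 := by
      have e : (q (n+1) : ℝ) ^ 4 = q (n+1) ^ 2 * q (n+1) ^ 2 := by ring
      rw [e]
      gcongr
      nlinarith
    gcongr
  have h3 : (1:ℝ) * q (n+2) ≤ (q n : ℝ) ^ 2 * q (n+2) := by
    gcongr
    nlinarith
  linarith

lemma c_le (n : ℕ) : (q n : ℝ) ^ 2 / q (n+1) ≤ 1 / (q n) ^ 3 := by
  have hq := h.q_pos n
  have hq1 := h.q_pos (n+1)
  have h1 : (q n : ℝ) ^ 4 * q n ≤ q (n+1) := by exact_mod_cast h.q_mono_mul n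
  rw [div_le_div_iff₀ hq1 (by positivity)]
  linarith [show (q n : ℝ) ^ 2 * q n ^ 3 = (q n : ℝ) ^ 4 * q n by ring]

lemma P_dist_add (n k : ℕ) (i : ℤ) (z : Torus2) :
    dist (P q s n i z) (P q s (n+k) i z) ≤
      |(i:ℝ)| * (2 * ((q n : ℝ) ^ 2 / q (n+1)) - 2 * ((q (n+k) : ℝ) ^ 2 / q (n+k+1))) := by
  induction k with
  | zero => simp
  | succ k ih =>
    have h1 := P_dist_succ h (n+k) i z
    have h2 := c_half h (n+k)
    refine (dist_triangle _ _ _).trans ((add_le_add ih h1).trans ?_)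
    rw [← mul_add]
    have : n + (k+1) = n + k + 1 := by omega
    rw [this]
    gcongr
    linarith

lemma P_dist_add' (n k : ℕ) (i : ℤ) (z : Torus2) :
    dist (P q s n i z) (P q s (n+k) i z) ≤ |(i:ℝ)| * (2 / (q n) ^ 3) := by
  refine (P_dist_add h n k i z).trans ?_
  gcongr
  have := c_le h n
  have h2 : 0 ≤ (q (n+k) : ℝ) ^ 2 / q (n+k+1) := by positivity
  have h3 : 2 / (q n : ℝ)^3 = 2 * (1 / q n ^3) := by ring
  linarith

lemma err_tendsto : Tendsto (fun n => 2 / (q n : ℝ) ^ 3) atTop (𝓝 0) := by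
  refine squeeze_zero (fun n => by positivity) (fun n => ?_) h.inv_q_tendsto
  have := h.q_ge1000 n
  rw [div_le_div_iff₀ (by positivity) (by positivity)]
  nlinarith [show (q n : ℝ)^3 = q n * q n * q n by ring, mul_pos (h.q_pos n) (h.q_pos n)]

lemma exists_lim (i : ℤ) (z : Torus2) :
    ∃ l, Tendsto (fun n => P q s n i z) atTop (𝓝 l) := by
  apply cauchySeq_tendsto_of_complete
  refine cauchySeq_of_le_tendsto_0 (fun n => 2 * (|(i:ℝ)| * (2 / (q n) ^ 3))) ?_ ?_
  · intro n m N hn hm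
    obtain ⟨a, rfl⟩ := Nat.exists_eq_add_of_le hn
    obtain ⟨b, rfl⟩ := Nat.exists_eq_add_of_le hm
    have h1 := P_dist_add' h N a i z
    have h2 := P_dist_add' h N b i z
    rw [dist_comm] at h1
    have := dist_triangle (P q s (N+a) i z) (P q s N i z) (P q s (N+b) i z)
    linarith
  · have := ((err_tendsto h).const_mul |(i:ℝ)|).const_mul 2
    simpa using this

end

/-- limit maps -/
noncomputable def Pinf (q s : ℕ → ℕ) (i : ℤ) (z : Torus2) : Torus2 :=
  limUnder atTop (fun n => P q s n i z)

section
variable {K d B : ℕ} {q s : ℕ → ℕ} (h : Hyp K d B q s)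
include h

lemma Pinf_tendsto (i : ℤ) (z : Torus2) :
    Tendsto (fun n => P q s n i z) atTop (𝓝 (Pinf q s i z)) :=
  tendsto_nhds_limUnder (exists_lim h i z)

lemma Pinf_dist (n : ℕ) (i : ℤ) (z : Torus2) :
    dist (P q s n i z) (Pinf q s i z) ≤ |(i:ℝ)| * (2 / (q n) ^ 3) := by
  have h1 : Tendsto (fun k => dist (P q s n i z) (P q s (k+n) i z)) atTop
      (𝓝 (dist (P q s n i z) (Pinf q s i z))) :=
    tendsto_const_nhds.dist ((tendsto_add_atTop_iff_nat n).2 (Pinf_tendsto h i z))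
  refine le_of_tendsto' h1 fun k => ?_
  rw [add_comm]; exact P_dist_add' h n k i z

/-- sharper version -/
lemma Pinf_dist2 (n : ℕ) (i : ℤ) (z : Torus2) :
    dist (P q s n i z) (Pinf q s i z) ≤ |(i:ℝ)| * (2 * ((q n) ^ 2 / q (n+1))) := by
  have h1 : Tendsto (fun k => dist (P q s n i z) (P q s (k+n) i z)) atTop
      (𝓝 (dist (P q s n i z) (Pinf q s i z))) :=
    tendsto_const_nhds.dist ((tendsto_add_atTop_iff_nat n).2 (Pinf_tendsto h i z))
  refine le_of_tendsto' h1 fun k => ?_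
  rw [add_comm]; refine (P_dist_add h n k i z).trans ?_
  gcongr
  have h2 : 0 ≤ (q (n+k) : ℝ) ^ 2 / q (n+k+1) := by positivity
  linarith

lemma Pinf_unif (i : ℤ) : TendstoUniformly (fun n => P q s n i) (Pinf q s i) atTop := by
  rw [Metric.tendstoUniformly_iff]
  intro ε hε
  have h1 := (err_tendsto h).const_mul |(i:ℝ)|
  rw [mul_zero] at h1
  filter_upwards [h1.eventually (gt_mem_nhds hε)] with n hn z
  rw [dist_comm]
  exact (Pinf_dist h n i z).trans_lt hn

lemma Pinf_cont (i : ℤ) : Continuous (Pinf q s i) :=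
  (Pinf_unif h i).continuous (Frequently.of_forall fun n => P_cont h n i)

lemma Pinf_zero (z : Torus2) : Pinf q s 0 z = z := by
  refine tendsto_nhds_unique (Pinf_tendsto h 0 z) ?_
  simp only [P_zero h]; exact tendsto_const_nhds

lemma Pinf_add (i j : ℤ) (z : Torus2) : Pinf q s (i + j) z = Pinf q s i (Pinf q s j z) := by
  refine tendsto_nhds_unique (Pinf_tendsto h (i+j) z) ?_
  simp only [P_add h]
  exact (Pinf_unif h i).tendsto_comp (Pinf_cont h i).continuousAt (Pinf_tendsto h j z)

lemma Pinf_iter (k : ℕ) (z : Torus2) : (Pinf q s 1)^[k] z = Pinf q s k z := by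
  induction k generalizing z with
  | zero => simp [Pinf_zero h]
  | succ k ih =>
    rw [Function.iterate_succ_apply', ih, ← Pinf_add h]
    congr 1; push_cast; ring

lemma Pinf_bij : Function.Bijective (Pinf q s 1) := by
  refine Function.bijective_iff_has_inverse.2 ⟨Pinf q s (-1), fun z => ?_, fun z => ?_⟩
  · rw [← Pinf_add h]; simp [Pinf_zero h]
  · rw [← Pinf_add h]; simp [Pinf_zero h]

lemma Pinf_invFun : Function.invFun (Pinf q s 1) = Pinf q s (-1) := by
  have h1 : Function.LeftInverse (Function.invFun (Pinf q s 1)) (Pinf q s 1) :=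
    Function.leftInverse_invFun (Pinf_bij h).1
  ext1 z
  have h2 : Pinf q s 1 (Pinf q s (-1) z) = z := by rw [← Pinf_add h]; simp [Pinf_zero h]
  have h3 := h1 (Pinf q s (-1) z)
  rwa [h2] at h3

end

end AbC


open MeasureTheory Filter Set
open scoped Topology ENNReal NNReal ContDiff

namespace AbC

lemma torusProj_add (p r : ℝ × ℝ) : torusProj (p + r) = torusProj p + torusProj r := by
  simp [torusProj]

lemma torusProj_sub (p r : ℝ × ℝ) : torusProj (p - r) = torusProj p - torusProj r := by
  simp [torusProj]

lemma torusProj_cont : Continuous torusProj := by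
  unfold torusProj
  exact ((AddCircle.continuous_mk' 1).comp continuous_fst).prodMk
    ((AddCircle.continuous_mk' 1).comp continuous_snd)

lemma torusProj_hL {q : ℕ} (hq : 1 ≤ q) (s : ℕ) (p : ℝ × ℝ) :
    torusProj (hL q s p) = hT q s (torusProj p) := by
  have hq0 : (q:ℝ) ≠ 0 := by positivity
  simp only [hL, vR_apply, uR, torusProj, hT, gT_coe, eT_coe]
  ext
  · simp
  · simp only
    rw [← AddCircle.coe_nsmul, ← AddCircle.coe_sub]
    congr 1
    simp [gR]; field_simp; ring

lemma torusProj_hLi (q : ℕ) (s : ℕ) (p : ℝ × ℝ) :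
    torusProj (hLi q s p) = hTi q s (torusProj p) := by
  simp only [hLi, vR_apply, uR, torusProj, hTi]
  have e : ((p.2 : ℝ) : Torus1) + q • ((p.1 : ℝ) : Torus1) = ((p.2 + q * p.1 : ℝ) : Torus1) := by
    rw [← AddCircle.coe_nsmul, ← AddCircle.coe_add, nsmul_eq_mul]
  rw [e, gT_coe, ← AddCircle.coe_sub]
  ext
  · simp only; congr 1; ring
  · rfl

section
variable {K d B : ℕ} {q s : ℕ → ℕ} (h : Hyp K d B q s)
include h

lemma torusProj_HL (n : ℕ) (p : ℝ × ℝ) : torusProj (HL q s n p) = HT q s n (torusProj p) := by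
  induction n generalizing p with
  | zero => rfl
  | succ n ih => simp only [HL, HT, Function.comp_apply, ih, torusProj_hL (q1 h n)]

lemma torusProj_HLi (n : ℕ) (p : ℝ × ℝ) : torusProj (HLi q s n p) = HTi q s n (torusProj p) := by
  induction n with
  | zero => rfl
  | succ n ih => simp only [HLi, HTi, Function.comp_apply, ih, torusProj_hLi]

lemma exists_lift (i : ℤ) (hi : |(i:ℝ)| ≤ 1) :
    ∃ F : ℝ × ℝ → ℝ × ℝ, ContDiff ℝ (((K - 1 : ℕ) : ℕ∞)) F ∧ IsLiftOf F (Pinf q s i) := by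
  let u : ℕ → ℝ × ℝ := fun n => (i * al q (n+1), -(i * (q n / q (n+1))))
  let v : ℕ → ℝ × ℝ := fun n => (i * al q n, 0)
  let D : ℕ → ℝ × ℝ → ℝ × ℝ := fun n p =>
    HL q s n (HLi q s n p + u n) - HL q s n (HLi q s n p + v n)
  have huv : ∀ n, ‖u n - v n‖ ≤ q n / q (n+1) := by
    intro n
    have hq := h.q_ge1000 n
    have hq1 := h.q_pos (n+1)
    simp only [u, v, Prod.mk_sub_mk, Prod.norm_mk]
    refine max_le ?_ ?_
    · rw [al_succ h, ← mul_sub, norm_mul, Real.norm_eq_abs, add_sub_cancel_left, Real.norm_eq_abs,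
        abs_of_pos (a := 1 / _) (by positivity)]
      calc _ ≤ 1 * (1 / (q (n+1) : ℝ)) := by gcongr
        _ ≤ _ := by rw [one_mul]; gcongr; linarith
    · rw [sub_zero, norm_neg, norm_mul, Real.norm_eq_abs, Real.norm_eq_abs,
        abs_of_pos (a := (q n : ℝ) / _) (by positivity)]
      calc _ ≤ 1 * ((q n : ℝ) / (q (n+1) : ℝ)) := by gcongr
        _ ≤ _ := by rw [one_mul]
  have hDb : ∀ k n x, k + 1 ≤ K → ‖iteratedFDeriv ℝ k (D n) x‖ ≤ 1 / (q n : ℝ) :=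
    fun k n x hk => diff_bound h n (u n) (v n) (huv n) k hk x
  have hK := h.hK
  have hsum : Summable (fun n => 1 / (q n : ℝ)) :=
    Summable.of_nonneg_of_le (fun n => by positivity) h.inv_q_le
      (summable_geometric_of_lt_one (by norm_num) (by norm_num))
  have hDc : ∀ n, ContDiff ℝ ∞ (D n) := by
    intro n
    have h1 := (HL_Bd h n).1
    have h2 := (HLi_Bd h n).1
    exact (h1.comp (h2.add contDiff_const)).sub (h1.comp (h2.add contDiff_const))
  have hDs : ∀ p, Summable (fun n => D n p) := by
    intro p
    refine Summable.of_norm_bounded hsum fun n => ?_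
    have := hDb 0 n p (by omega)
    rwa [norm_iteratedFDeriv_zero] at this
  refine ⟨fun p => p + ∑' n, D n p, ?_, ?_⟩
  · refine contDiff_id.add ?_
    refine contDiff_tsum (v := fun _ n => 1 / (q n : ℝ)) (fun n => ContDiff.toNat (hDc n) (K-1))
      (fun k _ => hsum) ?_
    intro k n x hk
    refine hDb k n x ?_
    have : k ≤ K - 1 := by exact_mod_cast hk
    omega
  · intro p
    have hS : ∀ N, torusProj (p + ∑ n ∈ Finset.range N, D n p) = P q s N i (torusProj p) := by
      intro N
      induction N with
      | zero => simp [P, cj, HT, HTi, al]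
      | succ N ih =>
        rw [Finset.sum_range_succ, ← add_assoc, torusProj_add, ih]
        simp only [D]
        rw [torusProj_sub, torusProj_HL h, torusProj_HL h, torusProj_add, torusProj_add,
          torusProj_HLi h, P_succ h]
        simp only [P, cj, torusProj, u, v]
        simp
    have h1 : Tendsto (fun N => torusProj (p + ∑ n ∈ Finset.range N, D n p)) atTop
        (𝓝 (torusProj (p + ∑' n, D n p))) :=
      (torusProj_cont.tendsto _).comp (tendsto_const_nhds.add (hDs p).hasSum.tendsto_sum_nat)
    simp only [hS] at h1
    exact tendsto_nhds_unique h1 (Pinf_tendsto h i _)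

lemma T_diffeo : IsCkTorusDiffeo ((K - 1 : ℕ) : ℕ∞) (Pinf q s 1) := by
  refine ⟨Pinf_bij h, exists_lift h 1 (by simp), ?_⟩
  rw [Pinf_invFun h]
  exact exists_lift h (-1) (by simp)

end

end AbC


open MeasureTheory Filter Set
open scoped Topology ENNReal NNReal ContDiff

namespace AbC

instance instProbT1 : IsProbabilityMeasure (volume : Measure Torus1) :=
  ⟨by rw [AddCircle.measure_univ]; simp⟩

instance instProbT2 : IsProbabilityMeasure (volume : Measure Torus2) :=
  inferInstanceAs (IsProbabilityMeasure ((volume : Measure Torus1).prod (volume : Measure Torus1)))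

instance instInvT2 : (volume : Measure Torus2).IsAddRightInvariant :=
  inferInstanceAs ((volume : Measure Torus1).prod (volume : Measure Torus1)).IsAddRightInvariant

lemma mp_of_tendsto {X Y : Type*} [MeasurableSpace X] [TopologicalSpace Y]
    [MeasurableSpace Y] [BorelSpace Y] [HasOuterApproxClosed Y]
    {μ : Measure X} {ν : Measure Y} [IsProbabilityMeasure μ] [IsProbabilityMeasure ν]
    {g : ℕ → X → Y} {g' : X → Y}
    (hg : ∀ n, MeasurePreserving (g n) μ ν) (hg' : Measurable g')
    (hlim : ∀ x, Tendsto (fun n => g n x) atTop (𝓝 (g' x))) : MeasurePreserving g' μ ν := by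
  refine ⟨hg', ?_⟩
  haveI : IsProbabilityMeasure (Measure.map g' μ) := Measure.isProbabilityMeasure_map hg'.aemeasurable
  refine ext_of_forall_integral_eq_of_IsFiniteMeasure fun f => ?_
  rw [integral_map hg'.aemeasurable f.continuous.measurable.aestronglyMeasurable]
  have h1 : Tendsto (fun n => ∫ x, f (g n x) ∂μ) atTop (𝓝 (∫ x, f (g' x) ∂μ)) := by
    refine tendsto_integral_of_dominated_convergence (fun _ => ‖f‖) ?_ (integrable_const _) ?_ ?_
    · intro n
      exact (f.continuous.measurable.comp (hg n).measurable).aestronglyMeasurable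
    · intro n; exact Eventually.of_forall fun x => f.norm_coe_le_norm _
    · exact Eventually.of_forall fun x => (f.continuous.tendsto _).comp (hlim x)
  have h2 : ∀ n, ∫ x, f (g n x) ∂μ = ∫ y, f y ∂ν := by
    intro n
    rw [← (hg n).map_eq, integral_map (hg n).measurable.aemeasurable
      f.continuous.measurable.aestronglyMeasurable]
  simp only [h2] at h1
  exact tendsto_nhds_unique h1 tendsto_const_nhds

section
variable {K d B : ℕ} {q s : ℕ → ℕ} (h : Hyp K d B q s)
include h

lemma hT_mp (n : ℕ) : MeasurePreserving (hT (q n) (s n)) volume volume := by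
  have hg := gT_cont h n
  have hV : MeasurePreserving (fun z : Torus2 => (z.1, z.2 - q n • z.1)) volume volume := by
    refine MeasurePreserving.skew_product (f := fun x : Torus1 => x)
      (g := fun (x y : Torus1) => y - q n • x) (MeasurePreserving.id volume) ?_ ?_
    · have : Continuous (Function.uncurry fun (x y : Torus1) => y - q n • x) := by
        unfold Function.uncurry; fun_prop
      exact this.measurable
    · exact Eventually.of_forall fun x => (measurePreserving_sub_right volume (q n • x)).map_eq
  have hU' : MeasurePreserving (fun z : Torus2 => (z.1, z.2 + gT (q n) (s n) z.1)) volume volume := by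
    refine MeasurePreserving.skew_product (f := fun x : Torus1 => x)
      (g := fun (x y : Torus1) => y + gT (q n) (s n) x) (MeasurePreserving.id volume) ?_ ?_
    · have : Continuous (Function.uncurry fun (x y : Torus1) => y + gT (q n) (s n) x) := by
        unfold Function.uncurry; fun_prop
      exact this.measurable
    · exact Eventually.of_forall fun x => (measurePreserving_add_right volume _).map_eq
  have hsw : MeasurePreserving (Prod.swap : Torus2 → Torus2) volume volume :=
    Measure.measurePreserving_swap
  have := hV.comp (hsw.comp (hU'.comp hsw))
  convert this using 1
  ext1 z
  simp only [hT, Function.comp_apply, Prod.swap, eT_eq (q1 h n)]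
  ext
  · rfl
  · simp only [smul_add]; abel

lemma HT_mp (n : ℕ) : MeasurePreserving (HT q s n) volume volume := by
  induction n with
  | zero => exact MeasurePreserving.id volume
  | succ n ih => exact ih.comp (hT_mp h n)

lemma HTi_mp (n : ℕ) : MeasurePreserving (HTi q s n) volume volume := by
  refine ⟨(HTi_cont h n).measurable, ?_⟩
  conv_lhs => rw [← (HT_mp h n).map_eq]
  rw [Measure.map_map (HTi_cont h n).measurable (HT_cont h n).measurable]
  have : HTi q s n ∘ HT q s n = id := by ext1 z; exact HTi_HT h n z
  rw [this, Measure.map_id]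

lemma cj_mp (n : ℕ) (t : Torus2) : MeasurePreserving (cj q s n t) volume volume :=
  (HT_mp h n).comp ((measurePreserving_add_right volume t).comp (HTi_mp h n))

lemma Pinf_mp (i : ℤ) : MeasurePreserving (Pinf q s i) volume volume :=
  mp_of_tendsto (fun n => cj_mp h n _) (Pinf_cont h i).measurable (fun z => Pinf_tendsto h i z)

end

/-- number of translates -/
def NN (q s : ℕ → ℕ) (n : ℕ) : ℕ := s n * q n ^ 2

noncomputable def vT (q s : ℕ → ℕ) (n : ℕ) : Torus2 :=
  (((1 / (s n * q n ^ 2) : ℝ) : Torus1), ((-(1 / (s n * q n)) : ℝ) : Torus1))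

section
variable {K d B : ℕ} {q s : ℕ → ℕ} (h : Hyp K d B q s)
include h

lemma s_pos (n : ℕ) : (0:ℝ) < s n := by have := s2 h n; exact_mod_cast (by omega : 0 < s n)

lemma NN_pos (n : ℕ) : 0 < NN q s n := by
  have := s2 h n; have := q1 h n
  unfold NN; positivity

lemma NN_mul (n : ℕ) : q n * NN q s n = q (n+1) := by
  rw [← h.s_mul, NN]; ring

lemma NN_vT (n : ℕ) : NN q s n • vT q s n = 0 := by
  have hs := s_pos h n
  have hq := h.q_pos n
  unfold vT NN
  ext
  · simp only [Prod.smul_mk, Prod.fst_zero]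
    rw [← AddCircle.coe_nsmul, nsmul_eq_mul]
    have : ((s n * q n ^ 2 : ℕ) : ℝ) * (1 / (s n * q n ^ 2)) = ((1:ℤ):ℝ) := by
      push_cast; field_simp
    rw [this, coe_int_zero]
  · simp only [Prod.smul_mk, Prod.snd_zero]
    rw [← AddCircle.coe_nsmul, nsmul_eq_mul]
    have : ((s n * q n ^ 2 : ℕ) : ℝ) * (-(1 / (s n * q n))) = ((-(q n : ℤ) : ℤ):ℝ) := by
      push_cast; field_simp
    rw [this, coe_int_zero]

lemma P_mul (n l : ℕ) (z : Torus2) :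
    P q s (n+1) ((q n * l : ℕ) : ℤ) z = cj q s n (l • vT q s n) z := by
  rw [P_succ h]
  congr 1
  have hs := s_pos h n
  have hq := h.q_pos n
  obtain ⟨m, hm⟩ := q_mul_al h n
  unfold vT
  ext
  · simp only [Prod.smul_mk]
    rw [← AddCircle.coe_nsmul, nsmul_eq_mul]
    have : (((q n * l : ℕ) : ℤ) : ℝ) * al q (n+1) = ((l * m : ℤ) : ℝ) + l * (1 / (s n * q n ^ 2)) := by
      push_cast
      rw [al_succ h, ← hm, ← s_mulR h n]
      field_simp
    rw [this, AddCircle.coe_add, coe_int_zero, zero_add]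
  · simp only [Prod.smul_mk]
    rw [← AddCircle.coe_nsmul, nsmul_eq_mul]
    congr 1
    push_cast
    rw [← s_mulR h n]
    field_simp

lemma density (n : ℕ) (t : Torus2) :
    ∃ l : ℕ, l < NN q s n ∧ dist (l • vT q s n) t ≤ 2 / q n := by
  have hs := s_pos h n
  have hq := h.q_pos n
  have hs1 : (1:ℝ) ≤ s n := by exact_mod_cast (by have := s2 h n; omega : 1 ≤ s n)
  obtain ⟨x, y⟩ := t
  obtain ⟨x0, rfl⟩ := QuotientAddGroup.mk_surjective x
  obtain ⟨y0, rfl⟩ := QuotientAddGroup.mk_surjective y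
  change ∃ l : ℕ, l < NN q s n ∧ dist (l • vT q s n) ((x0 : Torus1), (y0 : Torus1)) ≤ 2 / q n
  have ex : (x0 : Torus1) = ((Int.fract x0 : ℝ) : Torus1) := by
    conv_lhs => rw [← Int.floor_add_fract x0, AddCircle.coe_add, coe_int_zero, zero_add]
  have ey : (y0 : Torus1) = ((-(Int.fract (-y0)) : ℝ) : Torus1) := by
    have : y0 = ((-⌊-y0⌋ : ℤ) : ℝ) + -(Int.fract (-y0)) := by
      have := Int.floor_add_fract (-y0)
      push_cast; linarith
    conv_lhs => rw [this, AddCircle.coe_add, coe_int_zero, zero_add]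
  set xx := Int.fract x0 with hxx
  set yy := Int.fract (-y0) with hyy
  have hx0 : 0 ≤ xx := Int.fract_nonneg _
  have hx1 : xx < 1 := Int.fract_lt_one _
  have hy0 : 0 ≤ yy := Int.fract_nonneg _
  have hy1 : yy < 1 := Int.fract_lt_one _
  rw [ex, ey]
  let M : ℕ := s n * q n
  have hM : (0:ℝ) < M := by simp only [M]; push_cast; positivity
  set r : ℕ := ⌊(M:ℝ) * yy⌋₊ with hr
  set a : ℕ := ⌊(q n:ℝ) * xx⌋₊ with ha
  have hr1 : (r:ℝ) ≤ M * yy := Nat.floor_le (by positivity)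
  have hr2 : (M:ℝ) * yy < r + 1 := Nat.lt_floor_add_one _
  have ha1 : (a:ℝ) ≤ q n * xx := Nat.floor_le (by positivity)
  have ha2 : (q n:ℝ) * xx < a + 1 := Nat.lt_floor_add_one _
  have hrM : r < M := by
    have : (r:ℝ) < M := by nlinarith
    exact_mod_cast this
  have haq : a < q n := by
    have : (a:ℝ) < q n := by nlinarith
    exact_mod_cast this
  refine ⟨M * a + r, ?_, ?_⟩
  · have : NN q s n = M * q n := by simp only [NN, M]; ring
    rw [this]
    calc M * a + r < M * a + M := by omega
      _ = M * (a + 1) := by ring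
      _ ≤ M * q n := Nat.mul_le_mul_left _ haq
  · unfold vT
    rw [Prod.smul_mk, Prod.dist_eq]
    have hMR : (M:ℝ) = s n * q n := by simp only [M]; push_cast; ring
    refine max_le ?_ ?_
    · simp only
      rw [← AddCircle.coe_nsmul, nsmul_eq_mul]
      refine (dist_coe_le _ _).trans ?_
      have e1 : ((M * a + r : ℕ) : ℝ) * (1 / (s n * q n ^ 2)) = a / q n + (r / M) / q n := by
        push_cast; rw [hMR]; field_simp
      rw [e1]
      have e2 : (r:ℝ) / M ≤ 1 := by
        rw [div_le_one hM]; exact_mod_cast hrM.le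
      have e3 : 0 ≤ (r:ℝ)/M := by positivity
      have e4 : (a:ℝ) / q n + (r / M) / q n - xx = ((a + r / M) - q n * xx) / q n := by
        field_simp
      rw [e4, abs_div, abs_of_pos hq]
      gcongr
      rw [abs_le]; constructor <;> linarith
    · simp only
      rw [← AddCircle.coe_nsmul, nsmul_eq_mul]
      have e1 : ((M * a + r : ℕ) : ℝ) * (-(1 / (s n * q n))) = ((-(a:ℤ) : ℤ) : ℝ) + (-(r / M)) := by
        push_cast; rw [hMR]; field_simp; ring
      rw [e1, AddCircle.coe_add, coe_int_zero, zero_add]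
      refine (dist_coe_le _ _).trans ?_
      have e4 : -((r:ℝ) / M) - -yy = (M * yy - r) / M := by field_simp; ring
      rw [e4, abs_div, abs_of_pos hM, abs_of_nonneg (by linarith)]
      calc _ ≤ (1:ℝ) / M := by gcongr; linarith
        _ ≤ 2 / q n := by
          rw [div_le_div_iff₀ hM hq, hMR]; nlinarith

end

lemma sum_range_shift {g : ℕ → ℝ} {N : ℕ} (hg : ∀ l, g (l + N) = g l) (k : ℕ) :
    ∑ l ∈ Finset.range N, g (l + k) = ∑ l ∈ Finset.range N, g l := by
  induction k with
  | zero => rfl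
  | succ k ih =>
    rw [← ih]
    have h1 := Finset.sum_range_succ (fun l => g (l + k)) N
    have h2 := Finset.sum_range_succ' (fun l => g (l + k)) N
    have h3 : g (N + k) = g (0 + k) := by rw [add_comm, hg]; simp
    rw [h1] at h2
    simp only [h3] at h2
    have h4 : ∀ l, g (l + 1 + k) = g (l + (k + 1)) := fun l => by congr 1; ring
    simp only [h4] at h2
    linarith

section
variable {K d B : ℕ} {q s : ℕ → ℕ} (h : Hyp K d B q s)
include h

/-- equidistribution of the translates at level `n+1` -/
lemma avg_close (n : ℕ) (f : C(Torus2, ℝ)) {ε : ℝ} (hε : 0 < ε)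
    (hf : ∀ z w, dist z w ≤ 2 / q n → |f z - f w| ≤ ε) (z : Torus2) :
    |1 / (NN q s (n+1) : ℝ) * ∑ l ∈ Finset.range (NN q s (n+1)), f (cj q s (n+1) (l • vT q s (n+1)) z)
      - ∫ w, f w| ≤ ε := by
  set N := NN q s (n+1) with hN
  set v := vT q s (n+1) with hv
  have hNp : (0:ℝ) < N := by exact_mod_cast NN_pos h (n+1)
  let A : Torus2 → ℝ := fun w => 1 / (N:ℝ) * ∑ l ∈ Finset.range N, f (HT q s (n+1) (w + l • v))
  have hHc := HT_cont h (n+1)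
  have hq := h.q_pos n
  have hq1 := h.q_pos (n+1)
  have hAA : ∀ w w', |A w - A w'| ≤ ε := by
    intro w w'
    obtain ⟨l0, -, hl0⟩ := density h (n+1) (w' - w)
    have e1 : A w = 1 / (N:ℝ) * ∑ l ∈ Finset.range N, f (HT q s (n+1) (w + (l + l0) • v)) := by
      simp only [A]
      congr 1
      refine (sum_range_shift (g := fun l => f (HT q s (n+1) (w + l • v))) (fun l => ?_) l0).symm
      simp only [add_smul, hv, hN, NN_vT h, add_zero]
    rw [e1]
    simp only [A]
    rw [← mul_sub, ← Finset.sum_sub_distrib, abs_mul, abs_of_pos (by positivity : 0 < 1 / (N:ℝ))]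
    have e2 : |∑ l ∈ Finset.range N, (f (HT q s (n+1) (w + (l + l0) • v))
        - f (HT q s (n+1) (w' + l • v)))| ≤ N * ε := by
      refine (Finset.abs_sum_le_sum_abs _ _).trans ?_
      refine (Finset.sum_le_card_nsmul _ _ ε fun l _ => ?_).trans (by simp)
      refine hf _ _ ((HT_lip_succ h n _ _).trans ?_)
      have e3 : dist (w + (l + l0) • v) (w' + l • v) ≤ 2 / q (n+1) := by
        have : dist (w + (l + l0) • v) (w' + l • v) = dist (l0 • v) (w' - w) := by
          rw [dist_eq_norm, dist_eq_norm]; congr 1; rw [add_smul]; abel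
        rw [this]; exact hl0
      calc _ ≤ (q (n+1) : ℝ) / q n * (2 / q (n+1)) := by gcongr
        _ = _ := by field_simp
    calc _ ≤ 1 / (N:ℝ) * (N * ε) := by gcongr
      _ = ε := by field_simp
  have hAc : Continuous A := by
    simp only [A]
    fun_prop
  have hintg : ∀ l : ℕ, ∫ w, f (HT q s (n+1) (w + l • v)) = ∫ w, f w := by
    intro l
    have hm : MeasurePreserving (fun w : Torus2 => HT q s (n+1) (w + l • v)) volume volume :=
      (HT_mp h (n+1)).comp (measurePreserving_add_right volume (l • v))
    conv_rhs => rw [← hm.map_eq]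
    rw [integral_map hm.measurable.aemeasurable f.continuous.measurable.aestronglyMeasurable]
  have hci : ∀ g : Torus2 → ℝ, Continuous g → Integrable g volume := fun g hg =>
    hg.integrable_of_hasCompactSupport (HasCompactSupport.of_compactSpace g)
  have hAi : ∫ w, A w = ∫ w, f w := by
    simp only [A]
    rw [integral_const_mul, integral_finsetSum]
    · simp only [hintg]; simp; field_simp
    · intro l _; exact hci _ (by fun_prop)
  have h1 : A (HTi q s (n+1) z) - ∫ w, A w = ∫ w, (A (HTi q s (n+1) z) - A w) := by
    rw [integral_sub (integrable_const _) (hci _ hAc)]; simp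
  change |A (HTi q s (n+1) z) - ∫ w, f w| ≤ ε
  rw [← hAi, h1, ← Real.norm_eq_abs]
  refine (norm_integral_le_of_norm_le_const (C := ε)
    (Eventually.of_forall fun w => ?_)).trans (by simp)
  rw [Real.norm_eq_abs]; exact hAA _ _

lemma uniq_erg : UniquelyErgodicWithVolume (Pinf q s 1) := by
  refine ⟨Pinf_mp h 1, fun μ hμ hT => ?_⟩
  refine ext_of_forall_integral_eq_of_IsFiniteMeasure fun f => ?_
  have hTk : ∀ k : ℕ, MeasurePreserving (Pinf q s k) μ μ := by
    intro k
    have := hT.iterate k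
    have e : (Pinf q s 1)^[k] = Pinf q s k := by ext1 z; exact Pinf_iter h k z
    rwa [e] at this
  have hci : ∀ (g : Torus2 → ℝ), Continuous g → Integrable g μ := fun g hg =>
    hg.integrable_of_hasCompactSupport (HasCompactSupport.of_compactSpace g)
  refine eq_of_forall_dist_le fun ε hε => ?_
  have huc : UniformContinuous f := CompactSpace.uniformContinuous_of_continuous f.continuous
  obtain ⟨δ, hδ, hfδ⟩ := Metric.uniformContinuous_iff.1 huc (ε/2) (half_pos hε)
  have ht : Tendsto (fun n => 2 * (1 / (q n : ℝ))) atTop (𝓝 0) := by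
    simpa using h.inv_q_tendsto.const_mul 2
  obtain ⟨n, hn⟩ := (ht.eventually (gt_mem_nhds hδ)).exists
  have hn' : 2 / (q n : ℝ) < δ := by
    have : 2 / (q n : ℝ) = 2 * (1 / q n) := by ring
    rw [this]; exact hn
  set N := NN q s (n+1) with hN
  have hNp : (0:ℝ) < N := by exact_mod_cast NN_pos h (n+1)
  have hav := avg_close h n (f : C(Torus2, ℝ)) (half_pos hε)
    (fun z w hzw => (hfδ (hzw.trans_lt hn')).le)
  let A : Torus2 → ℝ := fun z => 1 / (N:ℝ) * ∑ l ∈ Finset.range N, f (Pinf q s ((q (n+1) * l : ℕ):ℤ) z)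
  have hAcl : ∀ z, ‖A z - ∫ w, f w‖ ≤ ε := by
    intro z
    have h1 := hav z
    have h2 : |A z - 1 / (N:ℝ) * ∑ l ∈ Finset.range N, f (cj q s (n+1) (l • vT q s (n+1)) z)| ≤ ε/2 := by
      simp only [A]
      rw [← mul_sub, ← Finset.sum_sub_distrib, abs_mul, abs_of_pos (by positivity : 0 < 1 / (N:ℝ))]
      have e2 : |∑ l ∈ Finset.range N, (f (Pinf q s ((q (n+1) * l : ℕ):ℤ) z)
          - f (cj q s (n+1) (l • vT q s (n+1)) z))| ≤ N * (ε/2) := by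
        refine (Finset.abs_sum_le_sum_abs _ _).trans ?_
        refine (Finset.sum_le_card_nsmul _ _ (ε/2) fun l hl => ?_).trans (by simp)
        refine (hfδ (lt_of_le_of_lt ?_ hn')).le
        rw [← P_mul h, dist_comm]
        refine (Pinf_dist h (n+2) _ z).trans ?_
        have hl' : q (n+1) * l ≤ q (n+2) := by
          rw [← NN_mul h (n+1)]
          exact Nat.mul_le_mul_left _ (Finset.mem_range.1 hl).le
        have hl2 : |(((q (n+1) * l : ℕ) : ℤ) : ℝ)| ≤ q (n+2) := by
          rw [Int.cast_natCast, abs_of_nonneg (by positivity)]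
          exact_mod_cast hl'
        have hq2 := h.q_ge1000 (n+2)
        have hqn : (q n : ℝ) ≤ q (n+2) := by
          have a1 := h.q_mono_mul n
          have a2 := h.q_mono_mul (n+1)
          have a3 : ∀ m, q m ≤ q m ^ 4 * q m := fun m =>
            Nat.le_mul_of_pos_left _ (by have := q1 h m; positivity)
          exact_mod_cast (a3 n).trans (a1.trans ((a3 _).trans a2))
        calc _ ≤ (q (n+2) : ℝ) * (2 / q (n+2) ^ 3) := by gcongr
          _ = 2 / (q (n+2)) ^ 2 := by field_simp
          _ ≤ 2 / q n := by
            have := h.q_pos n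
            gcongr
            nlinarith
      calc _ ≤ 1 / (N:ℝ) * (N * (ε/2)) := by gcongr
        _ = ε/2 := by field_simp
    rw [Real.norm_eq_abs]
    have h3 := abs_sub_le (A z) (1 / (N:ℝ) * ∑ l ∈ Finset.range N, f (cj q s (n+1) (l • vT q s (n+1)) z))
      (∫ w, f w)
    have h4 : |1 / (N:ℝ) * ∑ l ∈ Finset.range N, f (cj q s (n+1) (l • vT q s (n+1)) z) - ∫ w, f w|
      ≤ ε/2 := h1
    linarith
  have hintg : ∀ k : ℕ, ∫ z, f (Pinf q s k z) ∂μ = ∫ z, f z ∂μ := by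
    intro k
    conv_rhs => rw [← (hTk k).map_eq]
    rw [integral_map (hTk k).measurable.aemeasurable f.continuous.measurable.aestronglyMeasurable]
  have hAc : Continuous A := by
    have := fun i => Pinf_cont h i
    simp only [A]; fun_prop
  have hAi : ∫ z, A z ∂μ = ∫ z, f z ∂μ := by
    simp only [A]
    rw [integral_const_mul, integral_finsetSum]
    · simp only [hintg]; simp; field_simp
    · intro l _
      have := Pinf_cont h ((q (n+1) * l : ℕ):ℤ)
      exact hci _ (by fun_prop)
  have h1 : ∫ z, A z ∂μ - ∫ w, f w = ∫ z, (A z - ∫ w, f w) ∂μ := by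
    rw [integral_sub (hci _ hAc) (integrable_const _)]; simp
  rw [Real.dist_eq, ← hAi, h1, ← Real.norm_eq_abs]
  exact (norm_integral_le_of_norm_le_const (C := ε) (Eventually.of_forall hAcl)).trans (by simp)

end

end AbC


open MeasureTheory Filter Set
open scoped Topology ENNReal NNReal ContDiff

namespace AbC

lemma gT_norm (q s : ℕ) (y : Torus1) : ‖gT q s y‖ ≤ 1 / q := by
  obtain ⟨a, rfl⟩ := QuotientAddGroup.mk_surjective y
  change ‖gT q s (a : Torus1)‖ ≤ 1 / q
  rw [gT_coe]
  exact (norm_coe_le _).trans (abs_gR_le _ _ _)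

/-- outside the ramp the step map vanishes -/
lemma eT_zero_of {s : ℕ} (hs : 1 ≤ s) {a : ℝ} (h1 : 1 / (s:ℝ) ≤ a) (h2 : a < 1) :
    eT s (a : Torus1) = 0 := by
  have hs0 : (0:ℝ) < s := by positivity
  have ha0 : 0 ≤ a := le_trans (by positivity) h1
  have hf : ⌊a⌋ = 0 := Int.floor_eq_zero_iff.2 ⟨ha0, h2⟩
  have : eR s a = ((1:ℤ):ℝ) := by
    unfold eR
    rw [Int.fract, hf, Real.smoothTransition.one_of_one_le]
    · simp
    · rw [div_le_iff₀ hs0] at h1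
      simp; linarith
  rw [eT_coe, this, coe_int_zero]

lemma exists_fract_rep (t : Torus1) : ∃ a : ℝ, (a : Torus1) = t ∧ 0 ≤ a ∧ a < 1 := by
  obtain ⟨a, rfl⟩ := QuotientAddGroup.mk_surjective t
  refine ⟨Int.fract a, ?_, Int.fract_nonneg _, Int.fract_lt_one _⟩
  change ((Int.fract a : ℝ) : Torus1) = (a : Torus1)
  conv_rhs => rw [← Int.floor_add_fract a, AddCircle.coe_add, coe_int_zero, zero_add]

lemma bad_subset {s : ℕ} (hs : 1 ≤ s) :
    {y : Torus1 | eT s y ≠ 0} ⊆ Metric.closedBall 0 (1 / (s:ℝ)) := by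
  intro y hy
  obtain ⟨a, rfl, h0, h1⟩ := exists_fract_rep y
  rw [mem_closedBall_zero_iff]
  by_contra hlt
  push Not at hlt
  apply hy
  refine eT_zero_of hs ?_ h1
  have := norm_coe_le a
  rw [abs_of_nonneg h0] at this
  linarith

noncomputable def ps (q s : ℕ → ℕ) (n : ℕ) (z : Torus2) : Torus1 := (HTi q s n z).1

noncomputable def psi (q s : ℕ → ℕ) (z : Torus2) : Torus1 := limUnder atTop (fun n => ps q s n z)

noncomputable def alinf (q : ℕ → ℕ) : ℝ := ∑' k, 1 / (q (k+1) : ℝ)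

def A0 (q s : ℕ → ℕ) : Set Torus2 :=
  {z | ∀ᶠ n in atTop, eT (s n) (HTi q s (n+1) z).2 = 0}

section
variable {K d B : ℕ} {q s : ℕ → ℕ} (h : Hyp K d B q s)
include h

lemma q_double (n : ℕ) : 2 * (q n : ℝ) ≤ q (n+1) := by
  have h1 : (q n : ℝ) ^ 4 * q n ≤ q (n+1) := by exact_mod_cast h.q_mono_mul n
  have hq := h.q_ge1000 n
  have h2 : (2:ℝ) ≤ q n ^ 4 := by
    calc (2:ℝ) ≤ q n := by linarith
      _ ≤ q n ^ 4 := le_self_pow₀ (by linarith) (by norm_num)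
  nlinarith

lemma inv_half (n : ℕ) : 1 / (q n : ℝ) ≤ 2 / q n - 2 / q (n+1) := by
  have h1 := q_double h n
  have hq := h.q_pos n
  have : 2 / (q (n+1) : ℝ) ≤ 2 / (2 * q n) := by gcongr
  have e : 2 / (2 * (q n : ℝ)) = 1 / q n := by field_simp
  have e2 : 2 / (q n : ℝ) = 1 / q n + 1 / q n := by ring
  linarith

lemma ps_succ (n : ℕ) (z : Torus2) : dist (ps q s n z) (ps q s (n+1) z) ≤ 1 / q n := by
  unfold ps
  simp only [HTi, Function.comp_apply, hTi]
  rw [dist_eq_norm, sub_sub_cancel]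
  exact gT_norm _ _ _

lemma ps_add (n k : ℕ) (z : Torus2) :
    dist (ps q s n z) (ps q s (n+k) z) ≤ 2 / q n - 2 / q (n+k) := by
  induction k with
  | zero => simp
  | succ k ih =>
    have h1 := ps_succ h (n+k) z
    have h2 := inv_half h (n+k)
    have h3 := dist_triangle (ps q s n z) (ps q s (n+k) z) (ps q s (n+k+1) z)
    rw [← add_assoc]
    linarith

lemma ps_add' (n k : ℕ) (z : Torus2) : dist (ps q s n z) (ps q s (n+k) z) ≤ 2 / q n := by
  refine (ps_add h n k z).trans ?_
  have : 0 ≤ 2 / (q (n+k) : ℝ) := by positivity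
  linarith

lemma two_inv_tendsto : Tendsto (fun n => 2 / (q n : ℝ)) atTop (𝓝 0) := by
  have := h.inv_q_tendsto.const_mul 2
  rw [mul_zero] at this
  refine this.congr fun n => by ring

lemma psi_tendsto (z : Torus2) : Tendsto (fun n => ps q s n z) atTop (𝓝 (psi q s z)) := by
  apply tendsto_nhds_limUnder
  apply cauchySeq_tendsto_of_complete
  refine cauchySeq_of_le_tendsto_0 (fun n => 2 * (2 / (q n : ℝ))) ?_ ?_
  · intro n m N hn hm
    obtain ⟨a, rfl⟩ := Nat.exists_eq_add_of_le hn
    obtain ⟨b, rfl⟩ := Nat.exists_eq_add_of_le hm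
    have h1 := ps_add' h N a z
    have h2 := ps_add' h N b z
    rw [dist_comm] at h1
    have := dist_triangle (ps q s (N+a) z) (ps q s N z) (ps q s (N+b) z)
    linarith
  · simpa using (two_inv_tendsto h).const_mul 2

lemma psi_dist (n : ℕ) (z : Torus2) : dist (ps q s n z) (psi q s z) ≤ 2 / q n := by
  have h1 : Tendsto (fun k => dist (ps q s n z) (ps q s (k+n) z)) atTop
      (𝓝 (dist (ps q s n z) (psi q s z))) :=
    tendsto_const_nhds.dist ((tendsto_add_atTop_iff_nat n).2 (psi_tendsto h z))
  refine le_of_tendsto' h1 fun k => ?_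
  rw [add_comm]; exact ps_add' h n k z

lemma psi_unif : TendstoUniformly (ps q s) (psi q s) atTop := by
  rw [Metric.tendstoUniformly_iff]
  intro ε hε
  filter_upwards [(two_inv_tendsto h).eventually (gt_mem_nhds hε)] with n hn z
  rw [dist_comm]
  exact (psi_dist h n z).trans_lt hn

lemma ps_cont (n : ℕ) : Continuous (ps q s n) := continuous_fst.comp (HTi_cont h n)

lemma psi_cont : Continuous (psi q s) :=
  (psi_unif h).continuous (Frequently.of_forall fun n => ps_cont h n)

lemma psi_mp : MeasurePreserving (psi q s) volume volume := by
  refine mp_of_tendsto (g := ps q s) (fun n => ?_) (psi_cont h).measurable (psi_tendsto h)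
  have h1 : MeasurePreserving (Prod.fst : Torus2 → Torus1) volume volume :=
    measurePreserving_fst
  exact h1.comp (HTi_mp h n)

lemma al_summable : Summable (fun k => 1 / (q (k+1) : ℝ)) := by
  have hsum : Summable (fun n => 1 / (q n : ℝ)) :=
    Summable.of_nonneg_of_le (fun n => by positivity) h.inv_q_le
      (summable_geometric_of_lt_one (by norm_num) (by norm_num))
  exact (summable_nat_add_iff 1).2 hsum

lemma al_tendsto : Tendsto (al q) atTop (𝓝 (alinf q)) :=
  (al_summable h).hasSum.tendsto_sum_nat

lemma psi_T (z : Torus2) : psi q s (Pinf q s 1 z) = psi q s z + (alinf q : Torus1) := by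
  have h1 : Tendsto (fun n => ps q s n (P q s n 1 z)) atTop (𝓝 (psi q s (Pinf q s 1 z))) :=
    (psi_unif h).tendsto_comp (psi_cont h).continuousAt (Pinf_tendsto h 1 z)
  have h2 : ∀ n, ps q s n (P q s n 1 z) = ps q s n z + ((al q n : ℝ) : Torus1) := by
    intro n
    simp [ps, P, cj, HTi_HT h]
  simp only [h2] at h1
  refine tendsto_nhds_unique h1 ((psi_tendsto h z).add ?_)
  exact ((AddCircle.continuous_mk' 1).tendsto _).comp (al_tendsto h)

lemma al_add (n k : ℕ) : al q (n + k) - al q n ≤ 2 / q (n+1) - 2 / q (n+k+1) := by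
  induction k with
  | zero => simp
  | succ k ih =>
    have h1 := inv_half h (n+k+1)
    rw [← add_assoc, al_succ h]
    linarith

lemma al_irr : Irrational (alinf q) := by
  rintro ⟨r, hr⟩
  have hmono : Monotone (al q) := monotone_nat_of_le_succ fun n => by
    rw [al_succ h]; have : 0 ≤ 1 / (q (n+1) : ℝ) := by positivity
    linarith
  have hup : ∀ n, alinf q - al q n ≤ 2 / q (n+1) := by
    intro n
    have h1 : Tendsto (fun k => al q (k + n) - al q n) atTop (𝓝 (alinf q - al q n)) :=
      ((tendsto_add_atTop_iff_nat n).2 (al_tendsto h)).sub_const _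
    refine le_of_tendsto' h1 fun k => ?_
    rw [add_comm]
    have := al_add h n k
    have h0 : 0 ≤ 2 / (q (n+k+1) : ℝ) := by positivity
    linarith
  have hlow : ∀ n, al q n < alinf q := by
    intro n
    have h1 : al q (n+1) ≤ alinf q := hmono.ge_of_tendsto (al_tendsto h) _
    rw [al_succ h] at h1
    have : 0 < 1 / (q (n+1) : ℝ) := by have := h.q_pos (n+1); positivity
    linarith
  have hden : (0:ℝ) < r.den := by exact_mod_cast r.den_pos
  obtain ⟨n, hn⟩ := ((two_inv_tendsto h).eventually
    (gt_mem_nhds (by positivity : (0:ℝ) < 1 / r.den))).exists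
  obtain ⟨m, hm⟩ := q_mul_al h n
  have hrR : (r.den : ℝ) * alinf q = r.num := by
    rw [← hr]
    exact_mod_cast Rat.den_mul_eq_num r
  have hX : ((q n * r.num - r.den * m : ℤ) : ℝ) = r.den * q n * (alinf q - al q n) := by
    push_cast; rw [← hm, ← hrR]; ring
  have hq := h.q_pos n
  have hpos : (0:ℝ) < ((q n * r.num - r.den * m : ℤ) : ℝ) := by
    rw [hX]; have := hlow n
    have : 0 < alinf q - al q n := by linarith
    positivity
  have hlt : ((q n * r.num - r.den * m : ℤ) : ℝ) < 1 := by
    rw [hX]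
    have h1 : (q n : ℝ) ^ 4 * q n ≤ q (n+1) := by exact_mod_cast h.q_mono_mul n
    have hq1 := h.q_pos (n+1)
    have hq1000 := h.q_ge1000 n
    have h2 : (q n : ℝ) * (2 / q (n+1)) ≤ 2 / q n := by
      rw [mul_div_assoc', div_le_div_iff₀ hq1 hq]
      have : (q n : ℝ) * 1 ≤ (q n : ℝ) * q n ^ 3 := by
        gcongr; exact one_le_pow₀ (by linarith)
      nlinarith
    calc (r.den : ℝ) * q n * (alinf q - al q n) ≤ r.den * q n * (2 / q (n+1)) := by
          gcongr; exact hup n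
      _ = r.den * (q n * (2 / q (n+1))) := by ring
      _ ≤ r.den * (2 / q n) := by gcongr
      _ < r.den * (1 / r.den) := by gcongr
      _ = 1 := by field_simp
  have a1 : 0 < q n * r.num - r.den * m := by exact_mod_cast hpos
  have a2 : q n * r.num - r.den * m < 1 := by exact_mod_cast hlt
  omega

lemma bad_meas (n : ℕ) : MeasurableSet {z : Torus2 | eT (s n) (HTi q s (n+1) z).2 ≠ 0} := by
  have : Continuous fun z : Torus2 => eT (s n) (HTi q s (n+1) z).2 :=
    (eT_cont h n).comp (continuous_snd.comp (HTi_cont h (n+1)))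
  exact (isOpen_ne_fun this continuous_const).measurableSet

lemma bad_vol (n : ℕ) : volume {z : Torus2 | eT (s n) (HTi q s (n+1) z).2 ≠ 0}
    ≤ ENNReal.ofReal (2 * (1/2) ^ n) := by
  have hs2 := s2 h n
  have hm : MeasurePreserving (fun z : Torus2 => (HTi q s (n+1) z).2) volume volume := by
    have h1 : MeasurePreserving (Prod.snd : Torus2 → Torus1) volume volume := measurePreserving_snd
    exact h1.comp (HTi_mp h (n+1))
  have hmeas : MeasurableSet {y : Torus1 | eT (s n) y ≠ 0} :=
    (isOpen_ne_fun (eT_cont h n) continuous_const).measurableSet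
  have e1 := hm.measure_preimage hmeas.nullMeasurableSet
  have e2 : {z : Torus2 | eT (s n) (HTi q s (n+1) z).2 ≠ 0}
      = (fun z : Torus2 => (HTi q s (n+1) z).2) ⁻¹' {y : Torus1 | eT (s n) y ≠ 0} := rfl
  rw [e2, e1]
  refine (measure_mono (bad_subset (by omega))).trans ?_
  rw [AddCircle.volume_closedBall]
  apply ENNReal.ofReal_le_ofReal
  refine (min_le_right _ _).trans ?_
  have hs : (q n : ℝ) ≤ s n := by exact_mod_cast h.s_ge n
  have hq := h.q_pos n
  gcongr
  refine le_trans ?_ (h.inv_q_le n)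
  gcongr

lemma A0_meas : MeasurableSet (A0 q s) := by
  have : A0 q s = ⋃ m : ℕ, ⋂ n ≥ m, {z : Torus2 | eT (s n) (HTi q s (n+1) z).2 ≠ 0}ᶜ := by
    ext z; simp [A0, eventually_atTop]
  rw [this]
  exact MeasurableSet.iUnion fun m => MeasurableSet.iInter fun n => MeasurableSet.iInter fun _ =>
    (bad_meas h n).compl

lemma A0_ae : ∀ᵐ z ∂(volume : Measure Torus2), z ∈ A0 q s := by
  have h1 : ∑' n, volume {z : Torus2 | eT (s n) (HTi q s (n+1) z).2 ≠ 0} ≠ ⊤ := by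
    have hsum : Summable (fun n : ℕ => 2 * (1/2 : ℝ) ^ n) :=
      (summable_geometric_of_lt_one (by norm_num) (by norm_num)).mul_left 2
    refine ne_top_of_le_ne_top ?_ (ENNReal.tsum_le_tsum fun n => bad_vol h n)
    exact hsum.tsum_ofReal_ne_top
  filter_upwards [ae_eventually_notMem h1] with z hz
  unfold A0
  filter_upwards [hz] with n hn
  by_contra hc; exact hn hc

lemma psi_injOn : InjOn (psi q s) (A0 q s) := by
  intro z hz z' hz' heq
  have hev : ∀ᶠ n in atTop, dist z z' ≤ 6 * (1 / (q n : ℝ)) := by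
    have hz1 := (tendsto_add_atTop_nat 1).eventually hz
    have hz1' := (tendsto_add_atTop_nat 1).eventually hz'
    filter_upwards [hz1, hz1'] with n hn hn'
    set w := HTi q s (n+1+1) z with hw
    set w' := HTi q s (n+1+1) z' with hw'
    have hq := h.q_pos n
    have hq1 := h.q_pos (n+1)
    have hq2 := h.q_pos (n+1+1)
    have hd : dist w.1 w'.1 ≤ 4 / q (n+1+1) := by
      have a1 := psi_dist h (n+1+1) z
      have a2 := psi_dist h (n+1+1) z'
      rw [← heq, dist_comm] at a2
      have a3 := dist_triangle (ps q s (n+1+1) z) (psi q s z) (ps q s (n+1+1) z')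
      have a4 : 4 / (q (n+1+1) : ℝ) = 2 / q (n+1+1) + 2 / q (n+1+1) := by ring
      rw [a4]
      exact a3.trans (add_le_add a1 a2)
    have e1 : HTi q s (n+1) z = hT (q (n+1)) (s (n+1)) w := by
      exact (hT_hTi (q1 h (n+1)) (s (n+1)) (HTi q s (n+1) z)).symm
    have e2 : HTi q s (n+1) z' = hT (q (n+1)) (s (n+1)) w' := by
      exact (hT_hTi (q1 h (n+1)) (s (n+1)) (HTi q s (n+1) z')).symm
    have hqq : (q (n+1) : ℝ) * (4 / q (n+1+1)) ≤ 4 / q (n+1) := by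
      have h1 : (q (n+1) : ℝ) ^ 4 * q (n+1) ≤ q (n+1+1) := by exact_mod_cast h.q_mono_mul (n+1)
      have hq1000 := h.q_ge1000 (n+1)
      rw [mul_div_assoc', div_le_div_iff₀ hq2 hq1]
      have : (q (n+1) : ℝ) * 1 ≤ (q (n+1) : ℝ) * q (n+1) ^ 3 := by
        gcongr; exact one_le_pow₀ (by linarith)
      nlinarith
    have hqq2 : 4 / (q (n+1+1) : ℝ) ≤ 4 / q (n+1) := by
      have := q_double h (n+1)
      exact div_le_div_of_nonneg_left (by norm_num) hq1 (by linarith)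
    have hdd : dist (HTi q s (n+1) z) (HTi q s (n+1) z') ≤ 6 / q (n+1) := by
      rw [e1, e2, Prod.dist_eq]
      have e6 : 6 / (q (n+1) : ℝ) = 4 / q (n+1) + 2 * (1 / q (n+1)) := by ring
      have p1 : 0 ≤ 1 / (q (n+1) : ℝ) := by positivity
      refine max_le ?_ ?_
      · simp only [hT]
        refine (dist_add_add_le _ _ _ _).trans ?_
        have b1 := gT_norm (q (n+1)) (s (n+1)) w.2
        have b2 := gT_norm (q (n+1)) (s (n+1)) w'.2
        have b3 := dist_le_norm_add_norm (gT (q (n+1)) (s (n+1)) w.2) (gT (q (n+1)) (s (n+1)) w'.2)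
        linarith
      · simp only [hT, hn, hn', zero_sub]
        rw [dist_neg_neg]
        have b1 : dist (q (n+1) • w.1) (q (n+1) • w'.1) ≤ q (n+1) * dist w.1 w'.1 := by
          rw [dist_eq_norm, ← smul_sub, dist_eq_norm]
          exact norm_nsmul_le
        have b2 : (q (n+1) : ℝ) * dist w.1 w'.1 ≤ q (n+1) * (4 / q (n+1+1)) := by gcongr
        linarith
    have := HT_lip_succ h n (HTi q s (n+1) z) (HTi q s (n+1) z')
    rw [HT_HTi h, HT_HTi h] at this
    refine this.trans ?_
    calc _ ≤ (q (n+1) : ℝ) / q n * (6 / q (n+1)) := by gcongr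
      _ = _ := by field_simp
  have h0 : Tendsto (fun n => 6 * (1 / (q n : ℝ))) atTop (𝓝 0) := by
    simpa using h.inv_q_tendsto.const_mul 6
  exact dist_le_zero.1 (ge_of_tendsto h0 hev)

lemma T_iso : IsoToIrrationalRotation (Pinf q s 1) := by
  let A : Set Torus2 := {z | ∀ k : ℕ, Pinf q s k z ∈ A0 q s}
  have hAsub : A ⊆ A0 q s := fun z hz => by
    have := hz 0
    simpa [Pinf_zero h] using this
  have hAm : MeasurableSet A := by
    have : A = ⋂ k : ℕ, (Pinf q s k) ⁻¹' (A0 q s) := by ext z; simp [A]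
    rw [this]
    exact MeasurableSet.iInter fun k => (Pinf_cont h k).measurable (A0_meas h)
  have hA0 : volume Aᶜ = 0 := by
    have : ∀ᵐ z ∂(volume : Measure Torus2), ∀ k : ℕ, Pinf q s k z ∈ A0 q s :=
      ae_all_iff.2 fun k => (Pinf_mp h k).quasiMeasurePreserving.ae (A0_ae h)
    exact this
  have hinj : InjOn (psi q s) A := (psi_injOn h).mono hAsub
  have hBm : MeasurableSet (psi q s '' A) :=
    hAm.image_of_continuousOn_injOn (psi_cont h).continuousOn hinj
  have hTA : MapsTo (Pinf q s 1) A A := by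
    intro z hz k
    rw [← Pinf_add h]
    have := hz (k+1)
    simpa using this
  have hemb : MeasurableEmbedding (A.domRestrict (psi q s)) :=
    (psi_cont h).continuousOn.measurableEmbedding hAm hinj
  obtain ⟨φ, hφm, hφ⟩ := hemb.exists_measurable_extend (g := (Subtype.val : A → Torus2))
    measurable_subtype_coe (fun _ => ⟨0⟩)
  have hφ' : ∀ x ∈ A, φ (psi q s x) = x := fun x hx => congrFun hφ ⟨x, hx⟩
  refine ⟨alinf q, al_irr h, A, psi q s '' A, psi q s, φ, hAm, hBm, hA0, ?_, hTA, ?_,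
    (psi_cont h).measurable, hφm, mapsTo_image _ _, ?_, hφ', ?_, (psi_mp h).map_eq,
    fun x _ => psi_T h x⟩
  · rw [← (psi_mp h).measure_preimage hBm.compl.nullMeasurableSet]
    refine measure_mono_null ?_ hA0
    intro z hz hzA
    exact hz (mem_image_of_mem _ hzA)
  · rintro _ ⟨x, hx, rfl⟩
    exact ⟨_, hTA hx, psi_T h x⟩
  · rintro _ ⟨x, hx, rfl⟩
    rw [hφ' x hx]; exact hx
  · rintro _ ⟨x, hx, rfl⟩
    rw [hφ' x hx]

end

end AbC


open MeasureTheory Filter Set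
open scoped Topology ENNReal NNReal ContDiff

namespace AbC

section generic
variable {X : Type*} [PseudoMetricSpace X] (T : X → X)

lemma bowenDist_le {m : ℕ} {x y : X} {c : ℝ} (hc : 0 ≤ c)
    (hx : ∀ i < m, dist (T^[i] x) (T^[i] y) ≤ c) : bowenDist T m x y ≤ c := by
  unfold bowenDist
  lift c to ℝ≥0 using hc
  rw [NNReal.coe_le_coe, Finset.sup_le_iff]
  intro i hi
  rw [← NNReal.coe_le_coe, coe_nndist]
  exact hx i (Finset.mem_range.1 hi)

lemma le_bowenDist {m i : ℕ} (hi : i < m) (x y : X) :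
    dist (T^[i] x) (T^[i] y) ≤ bowenDist T m x y := by
  unfold bowenDist
  rw [← coe_nndist, NNReal.coe_le_coe]
  exact Finset.le_sup (f := fun i => nndist (T^[i] x) (T^[i] y)) (Finset.mem_range.2 hi)

lemma cover_le {m : ℕ} {ε : ℝ} (F : Finset X)
    (hF : ∀ y : X, ∃ x ∈ F, bowenDist T m x y < ε) : bowenCoverNum T m ε ≤ F.card :=
  Nat.sInf_le ⟨F, rfl, hF⟩

lemma le_cover {m N : ℕ} {ε : ℝ} (hne : ∃ F : Finset X, ∀ y : X, ∃ x ∈ F, bowenDist T m x y < ε)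
    (z : Fin N → X) (hz : ∀ j j', j ≠ j' → ∃ i < m, 2 * ε ≤ dist (T^[i] (z j)) (T^[i] (z j'))) :
    N ≤ bowenCoverNum T m ε := by
  obtain ⟨F0, hF0⟩ := hne
  obtain ⟨F, hF, hc⟩ := Nat.sInf_mem
    (s := {N : ℕ | ∃ F : Finset X, F.card = N ∧ ∀ y : X, ∃ x ∈ F, bowenDist T m x y < ε})
    ⟨_, F0, rfl, hF0⟩
  change F.card = bowenCoverNum T m ε at hF
  rw [← hF]
  choose f hfF hf using fun j => hc (z j)
  have hinj : Function.Injective f := by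
    intro j j' hjj
    by_contra hne
    obtain ⟨i, hi, hd⟩ := hz j j' hne
    have h1 := (le_bowenDist T hi (f j) (z j)).trans_lt (hf j)
    have h2 := (le_bowenDist T hi (f j') (z j')).trans_lt (hf j')
    rw [← hjj] at h2
    have h3 := dist_triangle_left (T^[i] (z j)) (T^[i] (z j')) (T^[i] (f j))
    linarith
  have := Finset.card_le_card_of_injOn (s := Finset.univ) (t := F) f (fun j _ => hfF j)
    hinj.injOn
  simpa using this

lemma cover_anti {m : ℕ} {ε ε' : ℝ} (hεε : ε ≤ ε')
    (hne : ∃ F : Finset X, ∀ y : X, ∃ x ∈ F, bowenDist T m x y < ε) :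
    bowenCoverNum T m ε' ≤ bowenCoverNum T m ε := by
  obtain ⟨F0, hF0⟩ := hne
  obtain ⟨F, hF, hc⟩ := Nat.sInf_mem
    (s := {N : ℕ | ∃ F : Finset X, F.card = N ∧ ∀ y : X, ∃ x ∈ F, bowenDist T m x y < ε})
    ⟨_, F0, rfl, hF0⟩
  change F.card = bowenCoverNum T m ε at hF
  rw [← hF]
  refine cover_le T F fun y => ?_
  obtain ⟨x, hx, hxy⟩ := hc y
  exact ⟨x, hx, hxy.trans_le hεε⟩

lemma ent_upper {ε C β : ℝ}
    (hU : ∀ m : ℕ, 1 ≤ m → (bowenCoverNum T m ε : ℝ) ≤ C * (m:ℝ) ^ β) {t : ℝ}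
    (ht : 0 < Filter.atTop.limsup fun n =>
      (bowenCoverNum T n ε : ℝ≥0∞) / ENNReal.ofReal (polScale n t)) : t ≤ β := by
  by_contra hlt
  push Not at hlt
  refine ht.ne' (Tendsto.limsup_eq ?_)
  have h1 : Tendsto (fun n : ℕ => ENNReal.ofReal (C * (n:ℝ) ^ (-(t - β)))) atTop (𝓝 0) := by
    rw [← ENNReal.ofReal_zero]
    refine ENNReal.tendsto_ofReal ?_
    have := (tendsto_rpow_neg_atTop (sub_pos.2 hlt)).comp tendsto_natCast_atTop_atTop
    simpa using this.const_mul C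
  refine tendsto_of_tendsto_of_tendsto_of_le_of_le' tendsto_const_nhds h1
    (Eventually.of_forall fun _ => zero_le) ?_
  filter_upwards [eventually_ge_atTop 1] with m hm
  have hm0 : (0:ℝ) < m := by exact_mod_cast hm
  have hp : 0 < polScale m t := Real.rpow_pos_of_pos hm0 t
  have e : (bowenCoverNum T m ε : ℝ≥0∞) = ENNReal.ofReal (bowenCoverNum T m ε : ℝ) := by simp
  rw [e, ← ENNReal.ofReal_div_of_pos hp]
  refine ENNReal.ofReal_le_ofReal ?_
  rw [div_le_iff₀ hp]
  refine (hU m hm).trans (le_of_eq ?_)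
  unfold polScale
  rw [mul_assoc, ← Real.rpow_add hm0]
  congr 2; ring

lemma ent_main {ε0 β γ : ℝ} (hε0 : 0 < ε0) (hγ : 0 < γ)
    (hU : ∀ ε > 0, ∃ C : ℝ, ∀ m : ℕ, 1 ≤ m → (bowenCoverNum T m ε : ℝ) ≤ C * (m:ℝ) ^ β)
    (hne : ∀ ε > 0, ∀ m, ∃ F : Finset X, ∀ y : X, ∃ x ∈ F, bowenDist T m x y < ε)
    (hL : ∃ᶠ m : ℕ in atTop, 1 ≤ m ∧ (m:ℝ) ^ γ ≤ bowenCoverNum T m ε0) :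
    ∃ E : ℝ, Tendsto (topSlowEntFun T polScale) (𝓝[>] (0 : ℝ)) (𝓝 E) ∧ γ ≤ E ∧ E ≤ β := by
  have hbd : ∀ ε > 0, β ∈ upperBounds {t : ℝ | 0 < t ∧
    0 < Filter.atTop.limsup fun n =>
      (bowenCoverNum T n ε : ℝ≥0∞) / ENNReal.ofReal (polScale n t)} := by
    rintro ε hε t ⟨_, ht⟩
    obtain ⟨C, hC⟩ := hU ε hε
    exact ent_upper T hC ht
  have hmem : γ ∈ {t : ℝ | 0 < t ∧
    0 < Filter.atTop.limsup fun n =>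
      (bowenCoverNum T n ε0 : ℝ≥0∞) / ENNReal.ofReal (polScale n t)} := by
    refine ⟨hγ, ?_⟩
    refine (zero_lt_one (α := ℝ≥0∞)).trans_le (le_limsup_of_frequently_le ?_)
    refine hL.mono ?_
    rintro m ⟨hm, hmm⟩
    have hm0 : (0:ℝ) < m := by exact_mod_cast hm
    have hp : 0 < polScale m γ := Real.rpow_pos_of_pos hm0 γ
    have e : (bowenCoverNum T m ε0 : ℝ≥0∞) = ENNReal.ofReal (bowenCoverNum T m ε0 : ℝ) := by simp
    rw [e, ← ENNReal.ofReal_div_of_pos hp, ENNReal.one_le_ofReal, one_le_div hp]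
    exact hmm
  have hβ : 0 ≤ β := hγ.le.trans (hbd ε0 hε0 hmem)
  have hle : ∀ ε > 0, topSlowEntFun T polScale ε ≤ β := fun ε hε =>
    Real.sSup_le (hbd ε hε) hβ
  have hanti : AntitoneOn (topSlowEntFun T polScale) (Ioi 0) := by
    intro ε hε ε' hε' hεε
    refine Real.sSup_le ?_ (Real.sSup_nonneg fun t ht => ht.1.le)
    rintro t ⟨ht0, ht⟩
    refine le_csSup ⟨β, hbd ε hε⟩ ⟨ht0, ht.trans_le ?_⟩
    refine limsup_le_limsup (Eventually.of_forall fun m => ?_)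
    refine ENNReal.div_le_div_right ?_ _
    exact_mod_cast cover_anti T hεε (hne ε hε m)
  have hbb : BddAbove (topSlowEntFun T polScale '' Ioi 0) := by
    refine ⟨β, ?_⟩
    rintro _ ⟨ε, hε, rfl⟩
    exact hle ε hε
  refine ⟨_, hanti.tendsto_nhdsGT hbb, ?_, ?_⟩
  · exact (le_csSup ⟨β, hbd ε0 hε0⟩ hmem).trans (le_csSup hbb ⟨ε0, hε0, rfl⟩)
  · refine Real.sSup_le ?_ hβ
    rintro _ ⟨ε, hε, rfl⟩
    exact hle ε hε

end generic

lemma exists_grid (A : ℕ) (hA : 0 < A) (t : Torus1) :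
    ∃ a < A, dist ((((a:ℝ) / A : ℝ)) : Torus1) t ≤ 1 / A := by
  obtain ⟨x, rfl, h0, h1⟩ := exists_fract_rep t
  have hA' : (0:ℝ) < A := by exact_mod_cast hA
  refine ⟨⌊x * A⌋₊, ?_, (dist_coe_le _ _).trans ?_⟩
  · rw [Nat.floor_lt (by positivity)]; nlinarith
  · have h2 := Nat.floor_le (a := x * A) (by positivity)
    have h3 := Nat.lt_floor_add_one (x * A)
    rw [abs_le]
    constructor
    · rw [← sub_nonneg]
      have : ((⌊x * A⌋₊:ℝ) / A - x - -(1/A)) = (⌊x * A⌋₊ + 1 - x * A) / A := by field_simp; ring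
      rw [this]
      apply div_nonneg <;> linarith
    · have : ((⌊x * A⌋₊:ℝ) / A) ≤ x := by rw [div_le_iff₀ hA']; exact h2
      have : 0 < 1 / (A:ℝ) := by positivity
      linarith

section
variable {K d B : ℕ} {q s : ℕ → ℕ} (h : Hyp K d B q s)
include h

lemma cover_upper (n m R : ℕ) {ε : ℝ} (hε : 0 < ε) (hR : 8 / ε ≤ R)
    (hm : (m:ℝ) * (2 * ((q (n+2) : ℝ) ^ 2 / q (n+3))) ≤ ε / 8) :
    ∃ F : Finset Torus2, F.card ≤ R ^ 2 * (B + 1) * q (n+1) ∧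
      ∀ y, ∃ x ∈ F, bowenDist (Pinf q s 1) m x y < ε := by
  classical
  have hRp : (0:ℝ) < R := lt_of_lt_of_le (by positivity) hR
  have hR0 : 0 < R := by exact_mod_cast hRp
  have hq := h.q_pos n
  have hq0 : 0 < q n := q1 h n
  have hs := s_pos h n
  have hs0 : 0 < s n := by have := s2 h n; omega
  obtain ⟨A, hA⟩ : ∃ A, A = R * q n ^ 2 := ⟨_, rfl⟩
  obtain ⟨A', hA'⟩ : ∃ A', A' = R * ((B + 1) * s n * q n) := ⟨_, rfl⟩
  refine ⟨(Finset.range A ×ˢ Finset.range A').image (fun p => HT q s (n+1)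
    ((((p.1:ℝ) / A : ℝ) : Torus1), (((p.2:ℝ) / A' : ℝ) : Torus1))), ?_, ?_⟩
  · refine Finset.card_image_le.trans ?_
    rw [Finset.card_product, Finset.card_range, Finset.card_range, hA, hA', ← h.s_mul n]
    apply le_of_eq; ring
  · intro y
    obtain ⟨a, ha, had⟩ := exists_grid A (by rw [hA]; positivity) (HTi q s (n+1) y).1
    obtain ⟨b, hb, hbd⟩ := exists_grid A' (by rw [hA']; positivity) (HTi q s (n+1) y).2
    refine ⟨_, Finset.mem_image.2 ⟨(a, b), by simp [ha, hb], rfl⟩, ?_⟩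
    refine lt_of_le_of_lt (bowenDist_le _ (c := ε / 2) (by positivity) fun i hi => ?_) (by linarith)
    rw [Pinf_iter h, Pinf_iter h]
    set x := HT q s (n+1) ((((a:ℝ) / A : ℝ) : Torus1), (((b:ℝ) / A' : ℝ) : Torus1)) with hx
    have herr : ∀ z, dist (P q s (n+2) i z) (Pinf q s i z) ≤ ε / 8 := by
      intro z
      refine (Pinf_dist2 h (n+2) i z).trans (le_trans ?_ hm)
      have : |((i:ℤ):ℝ)| ≤ m := by
        rw [Int.cast_natCast, abs_of_nonneg (by positivity)]; exact_mod_cast hi.le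
      have := h.q_pos (n+2)
      have := h.q_pos (n+3)
      gcongr
    have hmid : dist (P q s (n+2) i x) (P q s (n+2) i y) ≤ ε / 4 := by
      rw [P_succ h (n+1), P_succ h (n+1)]
      unfold cj
      rw [hx, HTi_HT h]
      simp only [HT, Function.comp]
      refine (HT_lip h n _ _).trans ?_
      refine (mul_le_mul_of_nonneg_left (hT_lip' h n _ _) hq.le).trans ?_
      simp only [Prod.fst_add, Prod.snd_add, dist_add_right]
      calc _ ≤ (q n:ℝ) * (q n * (1 / A) + (B + 1) * s n * (1 / A')) := by
            gcongr
        _ = 2 / R := by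
            rw [hA, hA']; push_cast; field_simp; ring
        _ ≤ ε / 4 := by
            rw [div_le_iff₀ hε] at hR
            rw [div_le_iff₀ hRp]; linarith
    have t1 := herr x
    have t2 := herr y
    have t3 := dist_triangle4 (Pinf q s i x) (P q s (n+2) i x) (P q s (n+2) i y) (Pinf q s i y)
    rw [dist_comm (Pinf q s i x) (P q s (n+2) i x)] at t3
    linarith

lemma q_split (n : ℕ) : (q (n+1) : ℝ) = (q n:ℝ) ^ (d-2) * (q n:ℝ) ^ 2 := by
  rw [h.q_succ n, ← pow_add]
  have := h.d_lb.2.2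
  push_cast
  congr 1; omega

lemma upper_pol {ε : ℝ} (hε : 0 < ε) : 
    (∀ m, ∃ F : Finset Torus2, ∀ y, ∃ x ∈ F, bowenDist (Pinf q s 1) m x y < ε) ∧
    ∃ C : ℝ, ∀ m : ℕ, 1 ≤ m → (bowenCoverNum (Pinf q s 1) m ε : ℝ) ≤
      C * (m:ℝ) ^ (1 / ((d:ℝ) - 2)) := by
  have hd := h.d_lb.2.2
  have hd2 : ((d - 2 : ℕ) : ℝ) = (d:ℝ) - 2 := by push_cast [Nat.cast_sub (by omega : 2 ≤ d)]; rfl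
  obtain ⟨R, hR⟩ := exists_nat_ge (8 / ε)
  have hex : ∀ m : ℕ, ∃ n, (m:ℝ) ≤ ε / 16 * (q (n+2):ℝ) ^ (d-2) := by
    intro m
    obtain ⟨n, hn⟩ := exists_nat_ge (16 * m / ε)
    refine ⟨n, ?_⟩
    have h1 : (n:ℝ) ≤ q (n+2) := by
      have := h.two_pow_le (n+2)
      have h2 : n + 2 < 2 ^ (n+2) := Nat.lt_two_pow_self
      exact_mod_cast (by omega : n ≤ q (n+2))
    have h2 : (q (n+2):ℝ) ≤ (q (n+2):ℝ) ^ (d-2) :=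
      le_self_pow₀ (by exact_mod_cast q1 h (n+2)) (by omega)
    rw [div_le_iff₀ hε] at hn
    nlinarith
  have hcond : ∀ m n : ℕ, (m:ℝ) ≤ ε / 16 * (q (n+2):ℝ) ^ (d-2) →
      (m:ℝ) * (2 * ((q (n+2) : ℝ) ^ 2 / q (n+3))) ≤ ε / 8 := by
    intro m n hmn
    have := h.q_pos (n+2)
    rw [q_split h (n+2)]
    have e : (m:ℝ) * (2 * ((q (n+2) : ℝ) ^ 2 / ((q (n+2):ℝ) ^ (d-2) * (q (n+2):ℝ) ^ 2)))
      = 2 * m / (q (n+2):ℝ) ^ (d-2) := by field_simp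
    rw [e, div_le_iff₀ (by positivity)]
    linarith
  refine ⟨fun m => ?_, ?_⟩
  · obtain ⟨n, hn⟩ := hex m
    obtain ⟨F, -, hF⟩ := cover_upper h n m R hε hR (hcond m n hn)
    exact ⟨F, hF⟩
  have hβ : 0 < 1 / ((d:ℝ) - 2) := by rw [← hd2]; have : 0 < d - 2 := by omega
                                      positivity
  set β := 1 / ((d:ℝ) - 2) with hβdef
  set C0 : ℝ := R ^ 2 * (B + 1) with hC0
  have hC0p : 0 ≤ C0 := by positivity
  refine ⟨C0 * q 1 + C0 * (16 / ε) ^ β, fun m hm => ?_⟩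
  have hm1 : (1:ℝ) ≤ m := by exact_mod_cast hm
  have hmp : 1 ≤ (m:ℝ) ^ β := Real.one_le_rpow hm1 hβ.le
  classical
  set n0 := Nat.find (hex m) with hn0
  have hn := Nat.find_spec (hex m)
  rw [← hn0] at hn
  obtain ⟨F, hFc, hF⟩ := cover_upper h n0 m R hε hR (hcond m n0 hn)
  have hN : (bowenCoverNum (Pinf q s 1) m ε : ℝ) ≤ C0 * q (n0 + 1) := by
    have := (cover_le _ F hF).trans hFc
    rw [hC0]; exact_mod_cast this
  refine hN.trans ?_
  have hpos2 : 0 ≤ C0 * (16 / ε) ^ β := by positivity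
  have hq1 := h.q_pos 1
  have hpos1 : 0 ≤ C0 * q 1 := by positivity
  rcases Nat.eq_zero_or_pos n0 with h0 | h0
  · rw [h0]
    nlinarith
  · obtain ⟨k, hk⟩ := Nat.exists_eq_succ_of_ne_zero h0.ne'
    have hlt := Nat.find_min (hex m) (m := k) (by rw [← hn0, hk]; exact Nat.lt_succ_self k)
    push Not at hlt
    have hqk : (q (n0+1):ℝ) ≤ (16 / ε) ^ β * (m:ℝ) ^ β := by
      rw [← Real.mul_rpow (by positivity) (by positivity)]
      have e : (q (n0+1):ℝ) = (((q (n0+1):ℝ)) ^ (d-2)) ^ β := by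
        rw [← Real.rpow_natCast, ← Real.rpow_mul (by positivity), hd2, hβdef, mul_one_div_cancel,
          Real.rpow_one]
        rw [← hd2]; have : 0 < d - 2 := by omega
        positivity
      rw [e]
      refine Real.rpow_le_rpow (by positivity) ?_ hβ.le
      rw [hk]
      have : (16 / ε) * (ε / 16 * (q (k+2):ℝ) ^ (d-2)) = (q (k+2):ℝ) ^ (d-2) := by field_simp
      change (q (k+2):ℝ) ^ (d-2) ≤ _
      rw [← this]
      gcongr
    have : C0 * q (n0+1) ≤ C0 * ((16 / ε) ^ β * (m:ℝ) ^ β) := by gcongr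
    have h3 : 0 ≤ C0 * q 1 * (m:ℝ) ^ β := by positivity
    linarith [mul_assoc C0 ((16 / ε) ^ β) ((m:ℝ) ^ β)]

end

end AbC


open MeasureTheory Filter Set
open scoped Topology ENNReal NNReal ContDiff

namespace AbC

section
variable {K d B : ℕ} {q s : ℕ → ℕ}

lemma HL_per (n : ℕ) (p : ℝ × ℝ) : HL q s n (p + (0, 1)) = HL q s n p + (0, 1) := by
  induction n generalizing p with
  | zero => rfl
  | succ n ih =>
    simp only [HL, Function.comp]
    rw [← ih]
    congr 1
    unfold hL uR
    simp only [vR_apply]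
    have := gR_periodic (q n) (s n) p.2
    ext
    · simp [this]
    · simp [this]; ring

variable (h : Hyp K d B q s)
include h

lemma half_pt (n : ℕ) : ∃ b : ℝ, 0 ≤ b ∧ b ≤ 1 ∧
    1 / 2 ≤ dist (HT q s n (0, (((1/2 + b : ℝ)) : Torus1))) (HT q s n (0, ((b : ℝ) : Torus1))) := by
  have hc : Continuous (fun b : ℝ => (HL q s n (0, b)).2) :=
    ((HL_Bd h n).1.continuous.comp (by fun_prop)).snd
  have hper : ∀ b : ℝ, (HL q s n (0, b + 1)).2 = (HL q s n (0, b)).2 + 1 := by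
    intro b
    have := HL_per (q := q) (s := s) n (0, b)
    simp only [Prod.mk_add_mk, add_zero] at this
    rw [this]; rfl
  let f : ℝ → ℝ := fun b => (HL q s n (0, 1/2 + b)).2 - (HL q s n (0, b)).2
  have hf : Continuous f := (hc.comp (continuous_const.add continuous_id)).sub hc
  have hsum : f 0 + f (1/2) = 1 := by
    have := hper 0
    simp only [f]
    norm_num at this ⊢
    linarith
  have hmem : (1/2:ℝ) ∈ uIcc (f 0) (f (1/2)) := by
    rw [mem_uIcc]
    rcases le_total (f 0) (1/2) with h1 | h1
    · left; constructor <;> linarith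
    · right; constructor <;> linarith
  obtain ⟨b, hb, hfb⟩ := intermediate_value_uIcc hf.continuousOn hmem
  rw [uIcc_of_le (by norm_num)] at hb
  refine ⟨b, hb.1, hb.2.trans (by norm_num), ?_⟩
  have e : ∀ b : ℝ, HT q s n (0, ((b : ℝ) : Torus1)) = torusProj (HL q s n (0, b)) := by
    intro b
    rw [torusProj_HL h]; rfl
  rw [e, e]
  refine le_trans (le_of_eq ?_) (le_max_right _ _)
  simp only [torusProj]
  rw [dist_eq_norm, ← AddCircle.coe_sub]
  change _ = ‖((f b : ℝ) : Torus1)‖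
  rw [hfb]
  have : ‖((1/2 : ℝ) : Torus1)‖ = |(1/2:ℝ) - round (1/2:ℝ)| := UnitAddCircle.norm_eq
  rw [this]
  have : round (1/2:ℝ) = 1 := by norm_num [round_eq]
  rw [this]; norm_num

lemma ramp_half (n : ℕ) : ∃ y : ℝ, 0 ≤ y ∧ y < 1 / (s n : ℝ) ∧
    eT (s n) (y : Torus1) = ((1/2 : ℝ) : Torus1) := by
  have hs := s_pos h n
  have hs2 : (2:ℝ) ≤ s n := by exact_mod_cast s2 h n
  have hmem : (1/2:ℝ) ∈ Ico (Real.smoothTransition 0) (Real.smoothTransition 1) := by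
    rw [Real.smoothTransition.zero, Real.smoothTransition.one]; norm_num
  obtain ⟨u, hu, hfu⟩ := intermediate_value_Ico (by norm_num)
    Real.smoothTransition.continuous.continuousOn hmem
  have hlt : u / s n < 1 := by rw [div_lt_one hs]; linarith [hu.2]
  have h0 : 0 ≤ u / s n := div_nonneg hu.1 hs.le
  refine ⟨u / s n, h0, by gcongr; exact hu.2, ?_⟩
  rw [eT_coe]
  congr 1
  have hf : ⌊u / (s n:ℝ)⌋ = 0 := Int.floor_eq_zero_iff.2 ⟨h0, hlt⟩
  unfold eR
  rw [Int.fract, hf]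
  simp only [Int.cast_zero, zero_add, sub_zero]
  rw [mul_div_cancel₀ _ hs.ne', hfu]

lemma sep_pt (k : ℕ) {η : ℝ} (h1 : 1 / (s (k+1) : ℝ) ≤ η) (h2 : η ≤ 1 - 1 / (s (k+1) : ℝ)) :
    ∃ w : Torus2, 2 / 5 ≤ dist (HT q s (k+2) w) (HT q s (k+2) (w + (0, (η : Torus1)))) := by
  obtain ⟨b, hb0, hb1, hb⟩ := half_pt h (k+1)
  obtain ⟨y, hy0, hy1, hy⟩ := ramp_half h (k+1)
  have hq := h.q_pos (k+1)
  have hqk := h.q_ge1000 k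
  have hy' : eT (s (k+1)) ((y : Torus1) + (η : Torus1)) = 0 := by
    rw [← AddCircle.coe_add]
    exact eT_zero_of (by have := s2 h (k+1); omega) (by linarith) (by linarith)
  set x : Torus1 := ((-(b / q (k+1)) : ℝ) : Torus1) with hx
  have hqx : q (k+1) • x = -(b : Torus1) := by
    rw [hx, ← AddCircle.coe_nsmul, ← AddCircle.coe_neg]
    congr 1
    simp only [nsmul_eq_mul]; field_simp
  have hxn : ‖x‖ ≤ 1 / q (k+1) := by
    refine (norm_coe_le _).trans ?_
    rw [abs_neg, abs_of_nonneg (by positivity)]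
    gcongr
  refine ⟨(x, y), ?_⟩
  have key : ∀ (y' c : Torus1), eT (s (k+1)) y' - q (k+1) • x = c →
      dist (HT q s (k+1) (hT (q (k+1)) (s (k+1)) (x, y'))) (HT q s (k+1) (0, c)) ≤ 2 / 1000 := by
    intro y' c hc
    refine (HT_lip_succ h k _ _).trans ?_
    have e : dist (hT (q (k+1)) (s (k+1)) (x, y')) (0, c) ≤ 2 / q (k+1) := by
      unfold hT
      simp only [hc]
      rw [Prod.dist_eq]
      simp only [dist_self, dist_zero_right]
      refine max_le ((norm_add_le _ _).trans ?_) (by positivity)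
      have := gT_norm (q (k+1)) (s (k+1)) y'
      have e2 : 2 / (q (k+1) : ℝ) = 1 / q (k+1) + 1 / q (k+1) := by ring
      rw [e2]; exact add_le_add hxn this
    calc _ ≤ (q (k+1) : ℝ) / q k * (2 / q (k+1)) := by gcongr
      _ = 2 / q k := by field_simp
      _ ≤ 2 / 1000 := by gcongr
  have k1 := key (y : Torus1) ((1/2 + b : ℝ) : Torus1) (by
    rw [hqx, hy, sub_neg_eq_add, AddCircle.coe_add])
  have k2 := key ((y : Torus1) + (η : Torus1)) (b : Torus1) (by
    rw [hqx, hy', sub_neg_eq_add, zero_add])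
  have t := dist_triangle4 (HT q s (k+1) (0, ((1/2 + b : ℝ) : Torus1)))
    (HT q s (k+1) (hT (q (k+1)) (s (k+1)) (x, (y : Torus1))))
    (HT q s (k+1) (hT (q (k+1)) (s (k+1)) (x, (y : Torus1) + (η : Torus1))))
    (HT q s (k+1) (0, (b : Torus1)))
  rw [dist_comm (HT q s (k+1) (0, ((1/2 + b : ℝ) : Torus1)))
    (HT q s (k+1) (hT (q (k+1)) (s (k+1)) (x, (y : Torus1))))] at t
  have e3 : ((x, (y:Torus1)) : Torus2) + (0, (η : Torus1)) = (x, (y : Torus1) + (η : Torus1)) := by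
    simp
  rw [e3]
  change 2 / 5 ≤ dist (HT q s (k+1) (hT (q (k+1)) (s (k+1)) (x, (y : Torus1))))
    (HT q s (k+1) (hT (q (k+1)) (s (k+1)) (x, (y : Torus1) + (η : Torus1))))
  linarith

lemma sep_time (k : ℕ) {j j' : ℕ} (hjj : j < j') (hj : j' < s (k+1)) :
    ∃ i < q (k+3), 2 * (1/10:ℝ) ≤
      dist ((Pinf q s 1)^[i] (HT q s (k+2) (0, (((j:ℝ) / s (k+1) : ℝ) : Torus1))))
        ((Pinf q s 1)^[i] (HT q s (k+2) (0, (((j':ℝ) / s (k+1) : ℝ) : Torus1)))) := by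
  have hs := s_pos h (k+1)
  have hj1 : (j:ℝ) + 1 ≤ j' := by exact_mod_cast hjj
  have hj2 : (j':ℝ) + 1 ≤ s (k+1) := by exact_mod_cast hj
  have hj0 : (0:ℝ) ≤ j := by positivity
  have hη2 : ((j':ℝ) - j) / s (k+1) ≤ 1 - 1 / (s (k+1) : ℝ) := by
    rw [one_sub_div hs.ne']
    exact div_le_div_of_nonneg_right (by linarith) hs.le
  obtain ⟨w, hw⟩ := sep_pt h k (η := ((j':ℝ) - j) / s (k+1)) (by gcongr; linarith) hη2
  set η : ℝ := ((j':ℝ) - j) / s (k+1) with hη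
  set a : Torus2 := (0, (((j:ℝ) / s (k+1) : ℝ) : Torus1)) with ha
  set a' : Torus2 := (0, (((j':ℝ) / s (k+1) : ℝ) : Torus1)) with ha'
  have haa : a' = a + (0, (η : Torus1)) := by
    rw [ha, ha', Prod.mk_add_mk, add_zero, ← AddCircle.coe_add]
    congr 2
    rw [hη]; ring
  obtain ⟨l, hl, hld⟩ := density h (k+2) (w - a)
  have hq2 := h.q_pos (k+2)
  have hq1 := h.q_ge1000 (k+1)
  have hq3 := h.q_ge1000 (k+3)
  have hil : q (k+2) * l < q (k+3) := by
    rw [← NN_mul h (k+2)]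
    exact Nat.mul_lt_mul_of_pos_left hl (q1 h (k+2))
  refine ⟨q (k+2) * l, hil, ?_⟩
  rw [Pinf_iter h, Pinf_iter h]
  have herr : ∀ z, dist (P q s (k+3) ((q (k+2) * l : ℕ) : ℤ) z)
      (Pinf q s ((q (k+2) * l : ℕ) : ℤ) z) ≤ 2 / 1000 := by
    intro z
    refine (Pinf_dist h (k+3) _ z).trans ?_
    have e1 : |(((q (k+2) * l : ℕ) : ℤ) : ℝ)| ≤ q (k+3) := by
      rw [Int.cast_natCast, abs_of_nonneg (by positivity)]
      exact_mod_cast hil.le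
    calc _ ≤ (q (k+3) : ℝ) * (2 / (q (k+3)) ^ 3) := by gcongr
      _ = 2 / (q (k+3)) ^ 2 := by field_simp
      _ ≤ 2 / 1000 := by gcongr; nlinarith
  have hnear : ∀ b w' : Torus2, w' - b = w - a →
      dist (P q s (k+3) ((q (k+2) * l : ℕ) : ℤ) (HT q s (k+2) b)) (HT q s (k+2) w') ≤ 2 / 1000 := by
    intro b w' hb
    rw [P_mul h (k+2)]
    unfold cj
    rw [HTi_HT h]
    refine (HT_lip_succ h (k+1) _ _).trans ?_
    have e : dist (b + l • vT q s (k+2)) w' = dist (l • vT q s (k+2)) (w - a) := by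
      rw [← hb, dist_eq_norm, dist_eq_norm]; congr 1; abel
    rw [e]
    calc _ ≤ (q (k+2) : ℝ) / q (k+1) * (2 / q (k+2)) := by gcongr
      _ = 2 / q (k+1) := by field_simp
      _ ≤ 2 / 1000 := by gcongr
  have n1 := hnear a w rfl
  have n2 := hnear a' (w + (0, (η : Torus1))) (by rw [haa]; abel)
  have r1 := herr (HT q s (k+2) a)
  have r2 := herr (HT q s (k+2) a')
  have t1 := dist_triangle4 (HT q s (k+2) w) (P q s (k+3) ((q (k+2) * l : ℕ) : ℤ) (HT q s (k+2) a))
    (P q s (k+3) ((q (k+2) * l : ℕ) : ℤ) (HT q s (k+2) a')) (HT q s (k+2) (w + (0, (η : Torus1))))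
  rw [dist_comm (HT q s (k+2) w) (P q s (k+3) _ _)] at t1
  have t2 := dist_triangle4 (P q s (k+3) ((q (k+2) * l : ℕ) : ℤ) (HT q s (k+2) a))
    (Pinf q s ((q (k+2) * l : ℕ) : ℤ) (HT q s (k+2) a))
    (Pinf q s ((q (k+2) * l : ℕ) : ℤ) (HT q s (k+2) a'))
    (P q s (k+3) ((q (k+2) * l : ℕ) : ℤ) (HT q s (k+2) a'))
  rw [dist_comm (Pinf q s ((q (k+2) * l : ℕ) : ℤ) (HT q s (k+2) a')) (P q s (k+3) _ _)] at t2
  linarith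

lemma cover_lower (k : ℕ) : s (k+1) ≤ bowenCoverNum (Pinf q s 1) (q (k+3)) (1/10) := by
  refine le_cover _ ((upper_pol h (by norm_num)).1 _)
    (fun j => HT q s (k+2) (0, (((j:ℕ):ℝ) / s (k+1) : ℝ))) ?_
  intro j j' hne
  rcases lt_or_gt_of_ne (fun hc => hne (Fin.ext hc) : (j:ℕ) ≠ j') with hlt | hlt
  · exact sep_time h k hlt j'.2
  · obtain ⟨i, hi, hd⟩ := sep_time h k hlt j.2
    exact ⟨i, hi, by rw [dist_comm]; exact hd⟩

lemma entropy : ∃ E : ℝ, Tendsto (topSlowEntFun (Pinf q s 1) polScale) (𝓝[>] (0 : ℝ)) (𝓝 E) ∧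
    1 / (K:ℝ) ^ 5 ≤ E ∧ E < 1 / ((K : ℝ) ^ 5 - (K : ℝ) - 8) := by
  have hd := h.d_lb.2.2
  have hdR : (28:ℝ) ≤ d := by exact_mod_cast hd
  have hKd : (K:ℝ) ^ 5 = d + 4 := by have := h.hd; exact_mod_cast this.symm
  have hK3 : 3 * (K:ℝ) ≤ d := by exact_mod_cast h.d_lb.2.1
  have hK2 : (2:ℝ) ≤ K := by exact_mod_cast h.hK
  have hγ : 0 < ((d:ℝ) - 3) / (d * d) := by
    apply div_pos <;> nlinarith
  obtain ⟨E, hE, h1, h2⟩ := ent_main (Pinf q s 1) (ε0 := 1/10) (β := 1 / ((d:ℝ) - 2)) (by norm_num)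
    hγ (fun ε hε => (upper_pol h hε).2) (fun ε hε => (upper_pol h hε).1) (by
      rw [frequently_atTop]
      intro a
      refine ⟨q (a+3), ?_, q1 h _, ?_⟩
      · have := h.two_pow_le (a+3)
        have h2 : a + 3 < 2 ^ (a+3) := Nat.lt_two_pow_self
        omega
      · refine le_trans (le_of_eq ?_) (Nat.cast_le.2 (cover_lower h a))
        rw [h.q_succ (a+2), h.q_succ (a+1), ← pow_mul, h.s_eq (a+1)]
        push_cast
        rw [← Real.rpow_natCast, ← Real.rpow_natCast, ← Real.rpow_mul (by positivity)]
        congr 1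
        rw [Nat.cast_sub (by omega)]
        push_cast
        field_simp)
  refine ⟨E, hE, le_trans ?_ h1, lt_of_le_of_lt h2 ?_⟩
  · rw [hKd, div_le_div_iff₀ (by linarith) (by nlinarith)]
    nlinarith
  · rw [hKd]
    apply one_div_lt_one_div_of_lt <;> linarith

end

theorem abc_main (K : ℕ) (hK : 1 < K) :
    ∃ T : Torus2 → Torus2,
      IsCkTorusDiffeo ((K - 1 : ℕ) : ℕ∞) T ∧
      UniquelyErgodicWithVolume T ∧
      IsoToIrrationalRotation T ∧
      ∃ E : ℝ,
        Filter.Tendsto (topSlowEntFun T polScale) (𝓝[>] (0 : ℝ)) (𝓝 E) ∧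
        1 / (K : ℝ) ^ 5 ≤ E ∧ E < 1 / ((K : ℝ) ^ 5 - (K : ℝ) - 8) := by
  obtain ⟨B, hB1, hB⟩ := step_Bd K
  have hK5 : 2 ^ 5 ≤ K ^ 5 := Nat.pow_le_pow_left hK 5
  obtain ⟨Q, hQ⟩ : ∃ Q, Q = 1000 + (B + 2) + K.factorial ^ 2 * 2 ^ K * (2 + K.factorial * B)
    + K.factorial * (K.factorial ^ K * (2 + K.factorial * B) ^ (K * K) * 2 ^ K) := ⟨_, rfl⟩
  let q : ℕ → ℕ := fun n => Q ^ ((K ^ 5 - 4) ^ n)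
  have hq0 : q 0 = Q := by simp [q]
  have h : Hyp K (K ^ 5 - 4) B q (fun n => q n ^ (K ^ 5 - 4 - 3)) :=
    { hK := hK
      hd := by omega
      hB1 := hB1
      hB := hB
      q_succ := fun n => by simp only [q]; rw [← pow_mul, pow_succ]
      s_eq := fun n => rfl
      q0 := by rw [hq0]; omega
      c1 := by rw [hq0]; omega
      c2 := by rw [hq0]; omega
      c3 := by rw [hq0]; omega }
  exact ⟨_, T_diffeo h, uniq_erg h, T_iso h, entropy h⟩

end AbC


/-- For every integer `K > 1` there exists a uniquely ergodic `C^{K-1}`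
diffeomorphism `T` of `𝕋²` whose unique invariant Borel probability measure is the
Haar–Lebesgue measure, measure-theoretically isomorphic to an irrational circle
rotation, whose upper topological slow entropy `E` w.r.t. the polynomial scale
`a^{pol}_m(t) = m^t` satisfies `1/K⁵ ≤ E < 1/(K⁵ - K - 8)`. -/
theorem stmt9 (K : ℕ) (hK : 1 < K) :
    ∃ T : Torus2 → Torus2,
      IsCkTorusDiffeo ((K - 1 : ℕ) : ℕ∞) T ∧
      UniquelyErgodicWithVolume T ∧
      IsoToIrrationalRotation T ∧
      ∃ E : ℝ,
        Filter.Tendsto (topSlowEntFun T polScale) (𝓝[>] (0 : ℝ)) (𝓝 E) ∧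
        1 / (K : ℝ) ^ 5 ≤ E ∧ E < 1 / ((K : ℝ) ^ 5 - (K : ℝ) - 8) := by
  exact AbC.abc_main K hK
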